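/- arXiv:1712.07338 — 2 statements merged into one kernel-verified Lean document; each statement's English description precedes it below -/
import Mathlib

section
/- Let u and v be integers and let f_{u,v}(X) = X³ − uvX − u², whose discriminant is D = u³(4v³ − 27u). Suppose that (KM-1) gcd(u, v) = 1; (KM-2) f_{u,v} is irreducible over ℚ; (KM-3) D is not a perfect square in ℤ; and (KM-4) one of the following holds: (a) 3 ∤ v, or (b) 3 ∣ v, uv ≢ 3 (mod 9), and u ≡ v + 1 (mod 9) or u ≡ v − 1 (mod 9), or (c) 3 ∣ v, uv ≡ 3 (mod 9), and u ≡ v + 1 (mod 27) or u ≡ v − 1 (mod 27). Then 3 divides the class number of the quadratic field ℚ(√D). -/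
lemma km_index_free (n : ℕ) :
    (nsmulAddMonoidHom (α := Fin n → ℤ) 3).range.index = 3 ^ n := by
  have : (nsmulAddMonoidHom (α := Fin n → ℤ) 3).range
      = AddSubgroup.pi Set.univ (fun _ : Fin n => AddSubgroup.zmultiples (3 : ℤ)) := by
    ext x
    simp only [AddMonoidHom.mem_range, nsmulAddMonoidHom_apply, AddSubgroup.mem_pi, Set.mem_univ,
      forall_true_left, Int.mem_zmultiples_iff]
    constructor
    · rintro ⟨y, rfl⟩ i
      exact ⟨y i, by simp⟩
    · intro h
      choose y hy using h
      exact ⟨y, by ext i; simp [hy i]⟩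
  rw [this, AddSubgroup.index_pi]
  simp [Int.index_zmultiples]

lemma km_fin (T : Type*) [AddCommGroup T] [Finite T] :
    (nsmulAddMonoidHom (α := T) 3).range.index = Nat.card (nsmulAddMonoidHom (α := T) 3).ker := by
  have h1 := AddSubgroup.card_mul_index (nsmulAddMonoidHom (α := T) 3).ker
  have h2 := AddSubgroup.card_mul_index (nsmulAddMonoidHom (α := T) 3).range
  rw [AddSubgroup.index_ker] at h1
  have : 0 < Nat.card (nsmulAddMonoidHom (α := T) 3).range := Nat.card_pos
  nlinarith

lemma km_ranknull (E E' : Type*) [AddCommGroup E] [AddCommGroup E'] [Module.Finite ℤ E]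
    (f : E →ₗ[ℤ] E') : Module.finrank ℤ (LinearMap.range f) + Module.finrank ℤ (LinearMap.ker f)
      = Module.finrank ℤ E := by
  rw [← f.quotKerEquivRange.finrank_eq]
  exact Submodule.finrank_quotient_add_finrank _

lemma km_fg_aux (A T : Type*) [AddCommGroup A] [AddCommGroup T] [Finite T] (n : ℕ)
    (f : A ≃+ (Fin n → ℤ) × T) :
    (nsmulAddMonoidHom (α := A) 3).range.index =
      3 ^ (Module.finrank ℤ A) * Nat.card (nsmulAddMonoidHom (α := A) 3).ker ∧
    Finite (nsmulAddMonoidHom (α := A) 3).ker := by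
  have hr : Module.finrank ℤ A = n := by
    rw [f.toIntLinearEquiv.finrank_eq]
    have h := km_ranknull _ _ (LinearMap.fst ℤ (Fin n → ℤ) T)
    rw [LinearMap.range_eq_top.mpr LinearMap.fst_surjective, finrank_top] at h
    have h0 : Module.finrank ℤ (LinearMap.ker (LinearMap.fst ℤ (Fin n → ℤ) T)) = 0 := by
      rw [LinearMap.ker_fst,
        LinearMap.finrank_range_of_inj (LinearMap.inr_injective)]
      apply Module.finrank_eq_zero_iff_isTorsion.mpr
      rw [← isAddTorsion_iff_isTorsion_int]
      exact isAddTorsion_of_finite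
    rw [h0] at h
    simpa using h.symm
  let ek : (nsmulAddMonoidHom (α := A) 3).ker ≃ (nsmulAddMonoidHom (α := T) 3).ker :=
    { toFun := fun x => ⟨(f x.1).2, by
        have h := x.2
        simp only [AddMonoidHom.mem_ker, nsmulAddMonoidHom_apply] at h ⊢
        rw [← Prod.smul_snd, ← map_nsmul, h, map_zero, Prod.snd_zero]⟩
      invFun := fun t => ⟨f.symm (0, t.1), by
        have h := t.2
        simp only [AddMonoidHom.mem_ker, nsmulAddMonoidHom_apply] at h ⊢
        rw [← map_nsmul, Prod.smul_mk, h, smul_zero]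
        exact map_zero _⟩
      left_inv := fun x => by
        have h := x.2
        simp only [AddMonoidHom.mem_ker, nsmulAddMonoidHom_apply] at h
        have h1 : 3 • (f x.1).1 = 0 := by
          rw [← Prod.smul_fst, ← map_nsmul, h, map_zero, Prod.fst_zero]
        have h2 : (f x.1).1 = 0 := by
          ext i
          have := congrFun h1 i
          simpa using this
        apply Subtype.ext
        apply f.injective
        simp only [AddEquiv.apply_symm_apply]
        exact Prod.ext h2.symm rfl
      right_inv := fun t => by
        apply Subtype.ext
        simp }
  have e2 : Nat.card (nsmulAddMonoidHom (α := A) 3).ker =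
      Nat.card (nsmulAddMonoidHom (α := T) 3).ker := Nat.card_congr ek
  have hfin : Finite (nsmulAddMonoidHom (α := A) 3).ker := Finite.of_equiv _ ek.symm
  have e1 : (nsmulAddMonoidHom (α := A) 3).range.index =
    (nsmulAddMonoidHom (α := Fin n → ℤ) 3).range.index *
      (nsmulAddMonoidHom (α := T) 3).range.index := by
    rw [← AddSubgroup.index_prod, ← AddSubgroup.index_map_equiv _ f]
    congr 1
    ext ⟨x, y⟩
    simp only [AddSubgroup.mem_map, AddSubgroup.mem_prod, AddMonoidHom.mem_range, nsmulAddMonoidHom_apply]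
    constructor
    · rintro ⟨_, ⟨z, rfl⟩, hz⟩
      refine ⟨⟨(f z).1, ?_⟩, ⟨(f z).2, ?_⟩⟩
      · simpa using congrArg Prod.fst hz
      · simpa using congrArg Prod.snd hz
    · rintro ⟨⟨a, rfl⟩, ⟨b, rfl⟩⟩
      exact ⟨_, ⟨f.symm (a, b), rfl⟩, by simp⟩
  exact ⟨by rw [e1, e2, hr, km_index_free, km_fin], hfin⟩

lemma km_fg (A : Type*) [AddCommGroup A] [Module.Finite ℤ A] :
    (nsmulAddMonoidHom (α := A) 3).range.index =
      3 ^ (Module.finrank ℤ A) * Nat.card (nsmulAddMonoidHom (α := A) 3).ker ∧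
    Finite (nsmulAddMonoidHom (α := A) 3).ker := by
  have : AddGroup.FG A := Module.Finite.iff_addGroup_fg.mp inferInstance
  obtain ⟨n, ι, fι, p, hp, e, ⟨f⟩⟩ := AddCommGroup.equiv_free_prod_directSum_zmod A
  have hT : Finite (DirectSum ι fun i => ZMod (p i ^ e i)) := by
    have : ∀ i, NeZero (p i ^ e i) := fun i => ⟨pow_ne_zero _ (hp i).ne_zero⟩
    classical
    exact Finite.of_equiv _ (DirectSum.addEquivProd (fun i => ZMod (p i ^ e i))).symm.toEquiv
  exact km_fg_aux A _ n (f.trans (AddEquiv.prodCongr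
    (Finsupp.linearEquivFunOnFinite ℤ ℤ (Fin n)).toAddEquiv (AddEquiv.refl _)))

lemma km_sq (M : Type*) [AddCommGroup M] (l : M →+ M)  :
    (l.comp l).range.index * Nat.card l.ker ^ 2 = l.range.index ^ 2 * Nat.card (l.comp l).ker := by
  have h1 : (l.comp l).range.index = (l.range ⊔ l.ker).index * l.range.index := by
    rw [← AddSubgroup.index_map, AddMonoidHom.range_comp]
  have h2 := AddSubgroup.relIndex_mul_index (le_sup_left : l.range ≤ l.range ⊔ l.ker)
  rw [AddSubgroup.relIndex_sup_left, ← AddSubgroup.inf_relIndex_right] at h2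
  have h3 : Nat.card l.ker = (l.range ⊓ l.ker).relIndex l.ker * Nat.card ↥(l.range ⊓ l.ker) := by
    rw [← AddSubgroup.relIndex_bot_left, ← AddSubgroup.relIndex_bot_left, mul_comm,
      AddSubgroup.relIndex_mul_relIndex _ _ _ bot_le inf_le_right]
  have h4 : Nat.card (l.comp l).ker = Nat.card l.ker * Nat.card ↥(l.range ⊓ l.ker) := by
    have hk : l.ker ≤ (l.comp l).ker := by
      intro x hx
      simp only [AddMonoidHom.mem_ker, AddMonoidHom.comp_apply] at *
      rw [hx, map_zero]
    have hm : (l.comp l).ker.map l = l.range ⊓ l.ker := by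
      ext x
      simp only [AddSubgroup.mem_map, AddMonoidHom.mem_ker, AddMonoidHom.comp_apply,
        AddSubgroup.mem_inf, AddMonoidHom.mem_range]
      constructor
      · rintro ⟨y, hy, rfl⟩
        exact ⟨⟨y, rfl⟩, hy⟩
      · rintro ⟨⟨y, rfl⟩, hy⟩
        exact ⟨y, hy, rfl⟩
    rw [← hm, ← AddSubgroup.relIndex_ker, ← AddSubgroup.relIndex_bot_left,
      ← AddSubgroup.relIndex_bot_left,  AddSubgroup.relIndex_mul_relIndex _ _ _ bot_le hk]
  rw [h1, h4]
  nth_rewrite 2 [h3]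
  rw [← h2]
  generalize (l.range ⊔ l.ker).index = a at *
  generalize (l.range ⊓ l.ker).relIndex l.ker = b at *
  generalize Nat.card ↥(l.range ⊓ l.ker) = c at *
  rw [h3]
  ring

lemma km_herbrand (E : Type*) [AddCommGroup E] [Module.Finite ℤ E] (s : E →+ E)
    (hs : ∀ x, s (s (s x)) = x) (c : ℕ) (hc : 0 < c)
    (hE : Module.finrank ℤ E = 3 * c - 1)
    (l N : E →+ E) (hl : ∀ x, l x = x - s x) (hN : ∀ x, N x = x + s x + s (s x))
    (hF : Module.finrank ℤ l.ker = c - 1) :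
    ∃ x, N x = 0 ∧ ∀ y, x ≠ y - s y := by
  by_contra! hcon
  have hrl : l.range = N.ker := by
    ext x
    simp only [AddMonoidHom.mem_range, AddMonoidHom.mem_ker]
    constructor
    · rintro ⟨y, rfl⟩
      simp only [hl, hN, map_sub, hs]
      abel
    · intro hx
      obtain ⟨y, hy⟩ := hcon x hx
      exact ⟨y, by rw [hl, hy]⟩
  have hM : Module.finrank ℤ N.ker = 2 * c := by
    have h := km_ranknull _ _ l.toIntLinearMap
    have h1 : Module.finrank ℤ (LinearMap.range l.toIntLinearMap) = Module.finrank ℤ N.ker := by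
      rw [← hrl]; rfl
    have h2 : Module.finrank ℤ (LinearMap.ker l.toIntLinearMap) = c - 1 := by
      rw [← hF]; rfl
    omega
  have hfgM : Module.Finite ℤ N.ker :=
    (inferInstance : Module.Finite ℤ (LinearMap.ker N.toIntLinearMap))
  have hfgF : Module.Finite ℤ l.ker :=
    (inferInstance : Module.Finite ℤ (LinearMap.ker l.toIntLinearMap))
  -- the restriction of `l` to `M`
  have hNl : ∀ x, N (l x) = 0 := fun x => by
    have : l x ∈ N.ker := hrl ▸ ⟨x, rfl⟩
    exact this
  let g : N.ker →+ N.ker := (l.comp N.ker.subtype).codRestrict N.ker (fun x => hNl _)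
  have hg : ∀ x, (g x : E) = x - s x := fun x => hl _
  have hgg : ∀ x, (g (g x) : E) = - (3 • s x) := fun x => by
    have hx : N x = 0 := x.2
    rw [hN] at hx
    rw [hg, hg, map_sub]
    have : s (s (x : E)) = - x - s x := by
      rw [← sub_eq_zero, ← hx]; abel
    rw [this]; abel
  obtain ⟨hM1, hM2⟩ := km_fg N.ker
  obtain ⟨hF1, hF2⟩ := km_fg l.ker
  have hsM : ∀ x, x ∈ N.ker → s x ∈ N.ker := fun x hx => by
    simp only [AddMonoidHom.mem_ker, hN] at *
    rw [← map_add, ← map_add, hx, map_zero]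
  have hrange : (g.comp g).range = (nsmulAddMonoidHom (α := N.ker) 3).range := by
    ext x
    simp only [AddMonoidHom.mem_range, AddMonoidHom.comp_apply, nsmulAddMonoidHom_apply]
    constructor
    · rintro ⟨y, rfl⟩
      refine ⟨- ⟨s y, hsM _ y.2⟩, ?_⟩
      apply Subtype.ext
      rw [hgg]; simp
    · rintro ⟨y, rfl⟩
      refine ⟨- ⟨s (s y), hsM _ (hsM _ y.2)⟩, ?_⟩
      apply Subtype.ext
      rw [hgg]; simp [hs]
  have hker : (g.comp g).ker = (nsmulAddMonoidHom (α := N.ker) 3).ker := by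
    ext x
    simp only [AddMonoidHom.mem_ker, AddMonoidHom.comp_apply, nsmulAddMonoidHom_apply]
    rw [← Subtype.coe_inj, hgg, ← Subtype.coe_inj]
    simp only [ZeroMemClass.coe_zero, neg_eq_zero, AddSubgroup.coe_nsmul, ← map_nsmul]
    constructor
    · intro h
      have := congrArg (fun z => s (s z)) h
      simpa only [hs, map_zero] using this
    · intro h
      rw [h, map_zero]
  have hsq := km_sq N.ker g
  rw [hrange, hker, hM1, hM] at hsq
  set k := Nat.card (nsmulAddMonoidHom (α := N.ker) 3).ker with hk
  have hkpos : 0 < k := Nat.card_pos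
  have hgi : g.range.index = 3 ^ c * Nat.card g.ker := by
    have : (3 ^ c * Nat.card g.ker) ^ 2 = g.range.index ^ 2 := by
      apply Nat.eq_of_mul_eq_mul_right hkpos
      rw [← hsq]; ring
    exact (Nat.pow_left_injective (n := 2) (by norm_num) this).symm
  -- kernel of `g`
  have hcard : Nat.card g.ker = Nat.card (nsmulAddMonoidHom (α := l.ker) 3).ker := by
    have hmem1 : ∀ x : E, x ∈ l.ker → (N x = 3 • x) := fun x hx => by
      have : s x = x := by
        rw [AddMonoidHom.mem_ker, hl, sub_eq_zero] at hx; exact hx.symm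
      rw [hN, this, this]; abel
    refine Nat.card_congr
      { toFun := fun x => ⟨⟨x.1.1, ?_⟩, ?_⟩
        invFun := fun x => ⟨⟨x.1.1, ?_⟩, ?_⟩
        left_inv := fun x => rfl
        right_inv := fun x => rfl }
    · have := congrArg Subtype.val (AddMonoidHom.mem_ker.mp x.2)
      exact this
    · have h1 : x.1.1 ∈ l.ker := congrArg Subtype.val (AddMonoidHom.mem_ker.mp x.2)
      rw [AddMonoidHom.mem_ker]
      apply Subtype.ext
      simp only [nsmulAddMonoidHom_apply, AddSubgroup.coe_nsmul, ZeroMemClass.coe_zero]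
      rw [← hmem1 _ h1]
      exact x.1.2
    · rw [AddMonoidHom.mem_ker, hmem1 _ x.1.2]
      exact congrArg Subtype.val (AddMonoidHom.mem_ker.mp x.2)
    · rw [AddMonoidHom.mem_ker]
      apply Subtype.ext
      exact x.1.2
  -- index comparison
  have hNF : (l.ker ⊔ N.ker).map N = (nsmulAddMonoidHom (α := l.ker) 3).range.map l.ker.subtype := by
    rw [AddSubgroup.map_sup]
    have : N.ker.map N = ⊥ := by
      rw [AddSubgroup.map_eq_bot_iff]
    rw [this, sup_bot_eq]
    ext x
    simp only [AddSubgroup.mem_map, AddMonoidHom.mem_range, nsmulAddMonoidHom_apply]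
    have h3 : ∀ y ∈ l.ker, N y = 3 • y := fun x hx => by
      have : s x = x := by
        rw [AddMonoidHom.mem_ker, hl, sub_eq_zero] at hx; exact hx.symm
      rw [hN, this, this]; abel
    constructor
    · rintro ⟨y, hy, rfl⟩
      exact ⟨_, ⟨⟨y, hy⟩, rfl⟩, by simp [h3 y hy]⟩
    · rintro ⟨_, ⟨y, rfl⟩, rfl⟩
      exact ⟨y, y.2, by simp [h3 y y.2]⟩
  have hlM : (l.ker ⊔ N.ker).map l = g.range.map N.ker.subtype := by
    rw [AddSubgroup.map_sup]
    have : l.ker.map l = ⊥ := by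
      rw [AddSubgroup.map_eq_bot_iff]
    rw [this, bot_sup_eq]
    ext x
    simp only [AddSubgroup.mem_map, AddMonoidHom.mem_range]
    constructor
    · rintro ⟨y, hy, rfl⟩
      exact ⟨_, ⟨⟨y, hy⟩, rfl⟩, rfl⟩
    · rintro ⟨_, ⟨y, rfl⟩, rfl⟩
      exact ⟨y, y.2, rfl⟩
  have hi1 : g.range.index = (l.ker ⊔ N.ker).index := by
    have h := AddSubgroup.relIndex_map_map l (l.ker ⊔ N.ker) ⊤
    rw [hlM, ← AddMonoidHom.range_eq_map, hrl, top_sup_eq, AddSubgroup.relIndex_top_right,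
      sup_eq_left.mpr (le_sup_left : l.ker ≤ _)] at h
    rw [← h, AddSubgroup.relIndex, AddSubgroup.addSubgroupOf,
      AddSubgroup.comap_map_eq_self_of_injective (AddSubgroup.subtype_injective _)]
  have hi2 : (l.ker ⊔ N.ker).index ≤ (nsmulAddMonoidHom (α := l.ker) 3).range.index := by
    have h := AddSubgroup.relIndex_map_map N (l.ker ⊔ N.ker) ⊤
    rw [hNF, ← AddMonoidHom.range_eq_map, top_sup_eq, AddSubgroup.relIndex_top_right,
      sup_eq_left.mpr (le_sup_right : N.ker ≤ _)] at h
    have h' : ((nsmulAddMonoidHom (α := l.ker) 3).range.map l.ker.subtype).relIndex l.ker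
        = (nsmulAddMonoidHom (α := l.ker) 3).range.index := by
      rw [AddSubgroup.relIndex, AddSubgroup.addSubgroupOf,
        AddSubgroup.comap_map_eq_self_of_injective (AddSubgroup.subtype_injective _)]
    rw [← h, ← h']
    apply AddSubgroup.relIndex_le_of_le_right
    · rintro _ ⟨y, rfl⟩
      rw [AddMonoidHom.mem_ker, hl, hN]
      simp only [map_add, hs]
      abel
    · rw [h', hF1]
      have : 0 < Nat.card (nsmulAddMonoidHom (α := l.ker) 3).ker := Nat.card_pos
      positivity
  rw [← hi1, hgi, hF1, hF, hcard] at hi2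
  have hpos : 0 < Nat.card (nsmulAddMonoidHom (α := l.ker) 3).ker := Nat.card_pos
  have h5 := Nat.le_of_mul_le_mul_right hi2 hpos
  have h6 : 3 ^ (c - 1) < 3 ^ c := Nat.pow_lt_pow_right (by norm_num) (by omega)
  omega
open NumberField

lemma km_descent {A B : Type*} [CommRing A] [CommRing B] [Algebra A B] (s : B →+* B)
    (hs : ∀ x, s (s (s x)) = x)
    (htr : ∀ a : B, ∃ r : A, algebraMap A B r = a + s a + s (s a))
    (hur : ∀ P : Ideal B, P.IsMaximal → ∃ w, s w - w ∉ P)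
    (I : Ideal B) (hI : ∀ a ∈ I, s a ∈ I) :
    (I.comap (algebraMap A B)).map (algebraMap A B) = I := by
  apply le_antisymm Ideal.map_comap_le
  set J := (I.comap (algebraMap A B)).map (algebraMap A B) with hJ
  have h1 : ∀ a ∈ I, a + s a + s (s a) ∈ J := by
    intro a ha
    obtain ⟨r, hr⟩ := htr a
    rw [← hr]
    apply Ideal.mem_map_of_mem
    rw [Ideal.mem_comap, hr]
    exact I.add_mem (I.add_mem ha (hI _ ha)) (hI _ (hI _ ha))
  have h2 : ∀ a ∈ I, ∀ w, (w - s w) * a + (s (s w) - s w) * s (s a) ∈ J := by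
    intro a ha w
    have e1 := h1 (w * a) (I.mul_mem_left _ ha)
    have e2 := J.mul_mem_left (s w) (h1 a ha)
    convert J.sub_mem e1 e2 using 1
    simp only [map_mul]; ring
  have h3 : ∀ a ∈ I, ∀ w w', (w - s w) * (w' - s (s w')) * a ∈ J := by
    intro a ha w w'
    have e1 := h2 (w' * a) (I.mul_mem_left _ ha) w
    have e2 := J.mul_mem_left (s (s w')) (h2 a ha w)
    convert J.sub_mem e1 e2 using 1
    simp only [map_mul]; ring
  intro a ha
  by_contra haJ
  let C : Ideal B := J.colon {a}
  have hC : C ≠ ⊤ := by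
    intro h
    have : (1 : B) ∈ C := h ▸ Submodule.mem_top
    rw [Submodule.mem_colon_singleton] at this
    simp at this
    exact haJ this
  obtain ⟨P, hP, hCP⟩ := Ideal.exists_le_maximal C hC
  obtain ⟨w, hw⟩ := hur P hP
  have key : ∀ w', w' - s (s w') ∈ P := by
    intro w'
    have : (w - s w) * (w' - s (s w')) ∈ P := by
      apply hCP
      rw [Submodule.mem_colon_singleton]
      exact h3 a ha w w'
    rcases hP.isPrime.mem_or_mem this with h | h
    · exact absurd (by rw [← neg_sub]; exact P.neg_mem h) hw
    · exact h
  apply hw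
  have e1 := key w
  have e2 := key (s (s w))
  rw [hs (s w)] at e2
  have := P.add_mem e1 e2
  rw [← neg_sub]
  apply P.neg_mem
  convert this using 1
  ring

section
variable {K L : Type*} [Field K] [NumberField K] [Field L] [NumberField L] [Algebra K L]
  [IsGalois K L]

lemma km_fixed (σ : Gal(L/K)) (hσ : ∀ x, x ∈ Subgroup.zpowers σ) (x : 𝓞 L)
    (hx : σ (x : L) = x) : ∃ r : 𝓞 K, algebraMap (𝓞 K) (𝓞 L) r = x := by
  have h : (x : L) ∈ Set.range (algebraMap K L) := by
    rw [IsGalois.mem_range_algebraMap_iff_fixed]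
    intro f
    have : f ∈ MulAction.stabilizer Gal(L/K) (x : L) := by
      have h1 : Subgroup.zpowers σ ≤ MulAction.stabilizer Gal(L/K) (x : L) := by
        rw [Subgroup.zpowers_le]
        exact hx
      exact h1 (hσ f)
    exact this
  obtain ⟨r, hr⟩ := h
  have hint : IsIntegral ℤ r := by
    rw [← isIntegral_algebraMap_iff (algebraMap K L).injective, hr]
    exact x.isIntegral_coe
  refine ⟨⟨r, hint⟩, ?_⟩
  apply RingOfIntegers.ext
  exact hr

lemma km_univ (σ : Gal(L/K)) (h3 : Module.finrank K L = 3)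
    (hσ1 : σ ≠ 1) : (∀ x, x ∈ Subgroup.zpowers σ) ∧ σ ^ 3 = 1 ∧
     ∀ x : L, algebraMap K L (Algebra.norm K x) = x * σ x * σ (σ x) := by
  have hc : Nat.card Gal(L/K) = 3 := by rw [IsGalois.card_aut_eq_finrank, h3]
  have : Fact (Nat.Prime 3) := ⟨by norm_num⟩
  have hgen : ∀ x, x ∈ Subgroup.zpowers σ := fun x => mem_zpowers_of_prime_card hc hσ1
  have hpow : σ ^ 3 = 1 := by rw [← hc]; exact pow_card_eq_one'
  have hord : orderOf σ = 3 := orderOf_eq_prime hpow hσ1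
  refine ⟨hgen, hpow, fun x => ?_⟩
  classical
  have hu : (Finset.univ : Finset Gal(L/K)) = (Finset.range 3).image (fun i => σ ^ i) := by
    symm
    apply Finset.eq_univ_of_card
    rw [Finset.card_image_of_injOn, Finset.card_range, ← hc, Nat.card_eq_fintype_card]
    intro i hi j hj hij
    simp only [Finset.coe_range, Set.mem_Iio] at hi hj
    exact pow_injOn_Iio_orderOf (by simpa [hord] using hi) (by simpa [hord] using hj) hij
  rw [Algebra.norm_eq_prod_automorphisms, hu, Finset.prod_image, Finset.prod_range_succ,
    Finset.prod_range_succ, Finset.prod_range_succ]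
  · simp [pow_succ]
  · intro i hi j hj hij
    simp only [Finset.coe_range, Set.mem_Iio] at hi hj
    exact pow_injOn_Iio_orderOf (by simpa [hord] using hi) (by simpa [hord] using hj) hij

end
section
variable {K L : Type*} [Field K] [NumberField K] [Field L] [NumberField L] [Algebra K L]
  [IsGalois K L]

lemma km_hilbert90 {F : Type*} [Field F] (s : F →+* F) (hs : ∀ x, s (s (s x)) = x)
    (hne : ∃ w, s w ≠ w) (e : F) (he : e * s e * s (s e) = 1) :
    ∃ y, y ≠ 0 ∧ y = e * s y := by
  by_contra! hcon
  have h0 : ∀ z, z + e * s z + e * s e * s (s z) = 0 := by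
    intro z
    by_contra h
    apply hcon _ h
    simp only [map_add, map_mul, hs]
    linear_combination (-z) * he
  obtain ⟨w, hw⟩ := hne
  have h1 : ∀ z, (w - s w) * z + e * s e * (s (s w) - s w) * s (s z) = 0 := by
    intro z
    have a := h0 (w * z)
    have b := h0 z
    simp only [map_mul] at a
    linear_combination a - s w * b
  have h2 := h1 w
  have h3 := h1 1
  simp only [map_one] at h3
  have h4 : (w - s w) * (w - s (s w)) = 0 := by
    linear_combination h2 - s (s w) * h3
  rcases mul_eq_zero.mp h4 with h | h
  · exact hw (sub_eq_zero.mp h).symm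
  · have := congrArg s (sub_eq_zero.mp h)
    rw [hs] at this
    exact hw this

lemma km_unit_exists (σ : Gal(L/K)) (h3 : Module.finrank K L = 3) (hσ1 : σ ≠ 1)
    (s : 𝓞 L ≃+* 𝓞 L) (hs : ∀ x, ((s x : 𝓞 L) : L) = σ x) :
    ∃ e : (𝓞 L)ˣ, (e : 𝓞 L) * s e * s (s e) = 1 ∧ ∀ y : (𝓞 L)ˣ, (e : 𝓞 L) * s y ≠ y := by
  obtain ⟨hgen, hpow, hnorm⟩ := km_univ σ h3 hσ1
  have hs3 : ∀ x, s (s (s x)) = x := by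
    intro x
    apply RingOfIntegers.ext
    rw [hs, hs, hs]
    exact DFunLike.congr_fun hpow (x : L)
  let sE : Additive (𝓞 L)ˣ →+ Additive (𝓞 L)ˣ := (Units.map (s : 𝓞 L →* 𝓞 L)).toAdditive
  have hsE : ∀ x, ((Additive.toMul (sE x) : (𝓞 L)ˣ) : 𝓞 L) = s (Additive.toMul x : (𝓞 L)ˣ) :=
    fun x => rfl
  have hfix : ∀ x : 𝓞 L, s x = x → ∃ r : 𝓞 K, algebraMap (𝓞 K) (𝓞 L) r = x := by
    intro x hx
    apply km_fixed σ hgen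
    rw [← hs, hx]
  have hsA : ∀ r : 𝓞 K, s (algebraMap (𝓞 K) (𝓞 L) r) = algebraMap (𝓞 K) (𝓞 L) r := by
    intro r
    apply RingOfIntegers.ext
    rw [hs]
    exact σ.commutes (r : K)
  let c := Fintype.card (InfinitePlace K)
  have hc : 0 < c := Fintype.card_pos
  have hcL : Fintype.card (InfinitePlace L) = c * 3 := by
    have : IsUnramifiedAtInfinitePlaces K L :=
      IsUnramifiedAtInfinitePlaces_of_odd_finrank (by rw [h3]; decide)
    rw [IsUnramifiedAtInfinitePlaces.card_infinitePlace K L, h3]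
  let l : Additive (𝓞 L)ˣ →+ Additive (𝓞 L)ˣ := AddMonoidHom.id _ - sE
  let N : Additive (𝓞 L)ˣ →+ Additive (𝓞 L)ˣ := AddMonoidHom.id _ + sE + sE.comp sE
  have hinj : Function.Injective (algebraMap (𝓞 K) (𝓞 L)) :=
    FaithfulSMul.algebraMap_injective _ _
  let i : Additive (𝓞 K)ˣ →+ Additive (𝓞 L)ˣ :=
    (Units.map (algebraMap (𝓞 K) (𝓞 L) : 𝓞 K →* 𝓞 L)).toAdditive
  have hi : Function.Injective i := fun x y h => Units.map_injective hinj h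
  have hir : LinearMap.range i.toIntLinearMap = LinearMap.ker l.toIntLinearMap := by
    ext x
    rw [LinearMap.mem_range, LinearMap.mem_ker]
    change (∃ y, i y = x) ↔ x - sE x = 0
    rw [sub_eq_zero]
    constructor
    · rintro ⟨y, rfl⟩
      apply Additive.toMul.injective
      apply Units.ext
      rw [hsE]
      exact (hsA _).symm
    · intro h
      have h1 : s (Additive.toMul x : (𝓞 L)ˣ) = (Additive.toMul x : (𝓞 L)ˣ) := by
        rw [← hsE, ← h]
      have h2 : s ((Additive.toMul x)⁻¹ : (𝓞 L)ˣ) = ((Additive.toMul x)⁻¹ : (𝓞 L)ˣ) := by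
        have h3 : Units.map (s : 𝓞 L →* 𝓞 L) (Additive.toMul x) = Additive.toMul x := Units.ext h1
        have h4 : Units.map (s : 𝓞 L →* 𝓞 L) (Additive.toMul x)⁻¹ = (Additive.toMul x)⁻¹ := by
          rw [map_inv, h3]
        exact congrArg Units.val h4
      obtain ⟨a, ha⟩ := hfix _ h1
      obtain ⟨b, hb⟩ := hfix _ h2
      have hab : a * b = 1 := by
        apply hinj
        rw [map_mul, ha, hb, map_one, Units.mul_inv]
      refine ⟨Additive.ofMul ⟨a, b, hab, by rw [mul_comm, hab]⟩, ?_⟩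
      apply Additive.toMul.injective
      apply Units.ext
      exact ha
  have hF : Module.finrank ℤ l.ker = c - 1 := by
    have h1 : Module.finrank ℤ (LinearMap.ker l.toIntLinearMap) = c - 1 := by
      rw [← hir, LinearMap.finrank_range_of_inj (f := i.toIntLinearMap) hi,
        NumberField.Units.finrank_eq]
      rfl
    exact h1
  have hE : Module.finrank ℤ (Additive (𝓞 L)ˣ) = 3 * c - 1 := by
    rw [NumberField.Units.finrank_eq, NumberField.Units.rank, hcL, mul_comm]
  obtain ⟨x, hx1, hx2⟩ := km_herbrand (Additive (𝓞 L)ˣ) sE (fun x => by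
      apply Additive.toMul.injective
      apply Units.ext
      rw [hsE, hsE, hsE, hs3]) c hc hE l N (fun x => rfl) (fun x => rfl) hF
  refine ⟨Additive.toMul x, ?_, ?_⟩
  · exact congrArg (fun z : Additive (𝓞 L)ˣ => ((Additive.toMul z : (𝓞 L)ˣ) : 𝓞 L)) hx1
  · intro y hy
    apply hx2 (Additive.ofMul y)
    rw [eq_sub_iff_add_eq]
    apply Additive.toMul.injective
    apply Units.ext
    exact hy

theorem km_general (σ : Gal(L/K)) (h3 : Module.finrank K L = 3) (hσ1 : σ ≠ 1)
    (s : 𝓞 L ≃+* 𝓞 L) (hs : ∀ x, ((s x : 𝓞 L) : L) = σ x)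
    (hur : ∀ P : Ideal (𝓞 L), P.IsMaximal → ∃ w, s w - w ∉ P) :
    3 ∣ NumberField.classNumber K := by
  obtain ⟨hgen, hpow, hnorm⟩ := km_univ σ h3 hσ1
  obtain ⟨e, he1, he2⟩ := km_unit_exists σ h3 hσ1 s hs
  have hs3 : ∀ x, s (s (s x)) = x := by
    intro x
    apply RingOfIntegers.ext
    rw [hs, hs, hs]
    exact DFunLike.congr_fun hpow (x : L)
  have hfix : ∀ x : 𝓞 L, s x = x → ∃ r : 𝓞 K, algebraMap (𝓞 K) (𝓞 L) r = x := by
    intro x hx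
    apply km_fixed σ hgen
    rw [← hs, hx]
  have hsA : ∀ r : 𝓞 K, s (algebraMap (𝓞 K) (𝓞 L) r) = algebraMap (𝓞 K) (𝓞 L) r := by
    intro r
    apply RingOfIntegers.ext
    rw [hs]
    exact σ.commutes (r : K)
  -- Hilbert 90
  obtain ⟨a, ha0, ha⟩ : ∃ a : 𝓞 L, a ≠ 0 ∧ a = e * s a := by
    obtain ⟨y, hy0, hy⟩ := km_hilbert90 (σ : L →+* L)
      (fun x => DFunLike.congr_fun hpow x)
      (by
        by_contra! h
        exact hσ1 (AlgEquiv.ext h)) ((e : 𝓞 L) : L) (by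
        have := congrArg (fun z : 𝓞 L => (z : L)) he1
        simpa [hs] using this)
    have hyalg : IsAlgebraic ℤ y :=
      (IsFractionRing.isAlgebraic_iff ℤ ℚ L).mpr (Algebra.IsAlgebraic.isAlgebraic (R := ℚ) y)
    obtain ⟨n, hn0, hn⟩ := hyalg.exists_integral_multiple
    obtain ⟨a, ha⟩ : ∃ a : 𝓞 L, (a : L) = n • y := ⟨⟨n • y, hn⟩, rfl⟩
    refine ⟨a, ?_, ?_⟩
    · intro h
      rw [h] at ha
      simp at ha
      tauto
    · apply RingOfIntegers.ext
      change (a : L) = ((e : 𝓞 L) : L) * ((s a : 𝓞 L) : L)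
      rw [hs, ha, map_zsmul]
      nth_rewrite 1 [hy]
      simp [mul_left_comm]
  have hI := km_descent (A := 𝓞 K) (s : 𝓞 L →+* 𝓞 L) hs3 (fun x => hfix _ (by
      simp only [map_add, RingHom.coe_coe, hs3]; ring)) hur (Ideal.span {a}) (by
      intro x hx
      rw [Ideal.mem_span_singleton] at hx ⊢
      obtain ⟨t, rfl⟩ := hx
      have : s a = (e⁻¹ : (𝓞 L)ˣ) * a := by
        nth_rewrite 2 [ha]
        simp
      simp only [RingHom.coe_coe, map_mul, this]
      exact ⟨(e⁻¹ : (𝓞 L)ˣ) * s t, by ring⟩)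
  set J := (Ideal.span {a}).comap (algebraMap (𝓞 K) (𝓞 L)) with hJ
  have hJ0 : J ≠ ⊥ := by
    intro h
    rw [h, Ideal.map_bot] at hI
    exact ha0 (Ideal.span_singleton_eq_bot.mp hI.symm)
  have hJ3 : J ^ 3 = Ideal.span {Algebra.intNorm (𝓞 K) (𝓞 L) a} := by
    rw [← Ideal.relNorm_singleton, ← hI, Ideal.relNorm_algebraMap]
    congr 1
    rw [← h3]
    exact (IsFractionRing.finrank_eq (𝓞 K) K (𝓞 L) L)
  by_contra hnd
  have hJp : J.IsPrincipal := by
    have hJm : J ∈ nonZeroDivisors (Ideal (𝓞 K)) := mem_nonZeroDivisors_of_ne_zero hJ0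
    have h1 : ClassGroup.mk0 ⟨J, hJm⟩ ^ 3 = 1 := by
      rw [← map_pow, ClassGroup.mk0_eq_one_iff]
      exact ⟨⟨_, hJ3⟩⟩
    have h2 : ClassGroup.mk0 ⟨J, hJm⟩ ^ (NumberField.classNumber K) = 1 := pow_card_eq_one
    have h3 : ClassGroup.mk0 ⟨J, hJm⟩ = 1 := by
      have hco : Nat.Coprime 3 (NumberField.classNumber K) :=
        (Nat.Prime.coprime_iff_not_dvd (by norm_num)).mpr hnd
      have := Nat.eq_one_of_dvd_coprimes hco (orderOf_dvd_of_pow_eq_one h1)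
        (orderOf_dvd_of_pow_eq_one h2)
      exact orderOf_eq_one_iff.mp this
    rwa [ClassGroup.mk0_eq_one_iff] at h3
  obtain ⟨⟨b, hb⟩⟩ := hJp
  have hb' : J = Ideal.span {b} := hb
  rw [hb', Ideal.map_span, Set.image_singleton, Ideal.span_singleton_eq_span_singleton] at hI
  obtain ⟨y, hy⟩ := hI
  have hb0 : algebraMap (𝓞 K) (𝓞 L) b ≠ 0 := by
    intro h
    rw [h, zero_mul] at hy
    exact ha0 hy.symm
  apply he2 y
  apply mul_left_cancel₀ hb0
  rw [← hy, map_mul, hsA] at ha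
  rw [ha]; ring
end
lemma km_vieta {R : Type*} [CommRing R] [IsDomain R] {x y z a b c : R} (hxy : x ≠ y) (hxz : x ≠ z)
    (hyz : y ≠ z) (hx : x ^ 3 + a * x ^ 2 + b * x + c = 0) (hy : y ^ 3 + a * y ^ 2 + b * y + c = 0)
    (hz : z ^ 3 + a * z ^ 2 + b * z + c = 0) :
    a = - (x + y + z) ∧ b = x * y + y * z + x * z := by
  have h1 : x ^ 2 + x * y + y ^ 2 + a * (x + y) + b = 0 := by
    apply mul_left_cancel₀ (sub_ne_zero.mpr hxy)
    linear_combination hx - hy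
  have h2 : x ^ 2 + x * z + z ^ 2 + a * (x + z) + b = 0 := by
    apply mul_left_cancel₀ (sub_ne_zero.mpr hxz)
    linear_combination hx - hz
  have h3 : x + y + z + a = 0 := by
    apply mul_left_cancel₀ (sub_ne_zero.mpr hyz)
    linear_combination h1 - h2
  exact ⟨by linear_combination h3, by linear_combination h1 - (x + y) * h3⟩

lemma km_core {R : Type*} [CommRing R] [IsDomain R] (s : R ≃+* R) (hs3 : ∀ x, s (s (s x)) = x)
    (P : Ideal R) (hP : ∀ w, s w - w ∈ P) (a b c : ℤ) (W : R)
    (hW : W ^ 3 + a * W ^ 2 + b * W + c = 0) (hne : s W ≠ W) :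
    (a : R) + 3 * W ∈ P ∧ 3 * W ^ 2 - (b : R) ∈ P := by
  have h1 : (s W) ^ 3 + a * (s W) ^ 2 + b * (s W) + c = 0 := by
    have := congrArg s hW
    simpa using this
  have h2 : (s (s W)) ^ 3 + a * (s (s W)) ^ 2 + b * (s (s W)) + c = 0 := by
    have := congrArg s h1
    simpa using this
  have hne2 : W ≠ s (s W) := by
    intro h
    have := congrArg s h
    rw [hs3] at this
    exact hne this
  obtain ⟨ha, hb⟩ := km_vieta hne.symm hne2 (fun h => hne (s.injective h).symm) hW h1 h2
  have e1 := hP W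
  have e2 := hP (s W)
  set d1 := s W - W with hd1
  set d2 := s (s W) - s W with hd2
  have q1 : s W = W + d1 := by rw [hd1]; ring
  have q2 : s (s W) = W + d1 + d2 := by rw [hd2, hd1]; ring
  rw [ha, hb, q2, q1]
  constructor
  · have := P.add_mem (P.mul_mem_left (-2) e1) (P.mul_mem_left (-1) e2)
    convert this using 1; ring
  · have := P.add_mem (P.mul_mem_left (-(4 * W + d2 + d1)) e1) (P.mul_mem_left (-(2 * W)) e2)
    convert this using 1; ring

lemma km_int_coprime {R : Type*} [CommRing R] (P : Ideal R) (hP : P ≠ ⊤) (m n : ℤ)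
    (hmn : Int.gcd m n = 1) (hm : (m : R) ∈ P) (hn : (n : R) ∈ P) : False := by
  apply hP
  rw [Ideal.eq_top_iff_one]
  have h := Int.gcd_eq_gcd_ab m n
  rw [hmn] at h
  have h' : (1 : R) = m * (Int.gcdA m n : ℤ) + n * (Int.gcdB m n : ℤ) := by
    have := congrArg (Int.cast : ℤ → R) h
    push_cast at this
    exact this
  rw [h']
  exact P.add_mem (P.mul_mem_right _ hm) (P.mul_mem_right _ hn)

lemma km_integral {L : Type*} [Field L] (a b c : ℤ) (w : L)
    (hw : w ^ 3 + a * w ^ 2 + b * w + c = 0) : IsIntegral ℤ w := by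
  refine ⟨Polynomial.X ^ 3 + (Polynomial.C a * Polynomial.X ^ 2 + Polynomial.C b * Polynomial.X
    + Polynomial.C c), ?_, ?_⟩
  · apply Polynomial.monic_X_pow_add
    compute_degree!
  · simp only [Polynomial.eval₂_add, Polynomial.eval₂_mul, Polynomial.eval₂_pow,
      Polynomial.eval₂_X, Polynomial.eval₂_C]
    simp only [eq_intCast]
    linear_combination hw

lemma km_three (t : ℤ) (h : ¬ 3 ∣ t) : Int.gcd 3 t = 1 := by
  have h2 := (Int.prime_three.coprime_iff_not_dvd (n := t)).mpr h
  exact Int.isCoprime_iff_gcd_eq_one.mp h2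

section
variable {K L : Type*} [Field K] [NumberField K] [Field L] [NumberField L] [Algebra K L]
  [IsGalois K L]

/-- existence of the element with trace prime to three -/
lemma km_elem (σ : L ≃+* L) (u v : ℤ) (θ : L) (hne : σ θ ≠ θ) (hθ0 : θ ≠ 0) (hu : u ≠ 0)
    (hθ : θ ^ 3 - u * v * θ - u ^ 2 = 0)
    (hnr : ∀ x : ℤ, x ^ 3 - u * v * x - u ^ 2 ≠ 0)
    (h3v : 3 ∣ v)
    (h : (¬ u * v ≡ 3 [ZMOD 9] ∧ u ≡ v + 1 [ZMOD 9]) ∨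
      (u * v ≡ 3 [ZMOD 9] ∧ u ≡ v + 1 [ZMOD 27])) :
    ∃ (a b c : ℤ) (w : L), w ^ 3 + a * w ^ 2 + b * w + c = 0 ∧ σ w ≠ w ∧ ¬ 3 ∣ a := by
  have hu' : (u : L) ≠ 0 := by exact_mod_cast hu
  obtain ⟨k, rfl⟩ := h3v
  push_cast at hθ
  rcases h with ⟨h1, h2⟩ | ⟨h1, h2⟩
  · obtain ⟨m, hm⟩ := h2.dvd
    have hm0 : m ≠ 0 := by
      rintro rfl
      apply hnr u
      have : u = 3 * k + 1 := by omega
      rw [this]; ring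
    have hk : ¬ 3 ∣ 1 + 2 * k := by
      intro hk
      apply h1
      have hu2 : u = 3 * k + 1 - 9 * m := by omega
      obtain ⟨r, hr⟩ := hk
      obtain ⟨j, hj⟩ : ∃ j, k = 1 + 3 * j := ⟨(k - 1) / 3, by omega⟩
      rw [Int.modEq_iff_dvd, hu2, hj]
      exact ⟨- (j + (1 + 3 * j) * (1 + 3 * j) - 3 * m * (1 + 3 * j)), by ring⟩
    have hm0' : (m : L) ≠ 0 := by exact_mod_cast hm0
    have h3 : (3 : L) ≠ 0 := by norm_num
    have huL : (u : L) = 3 * k + 1 - 9 * m := by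
      have : u = 3 * k + 1 - 9 * m := by omega
      rw [this]; push_cast; ring
    have hz : (u : L) - θ ≠ 0 := by
      intro h0
      have : θ = u := by linear_combination - h0
      rw [this] at hθ
      have h4 : ((u ^ 3 - u * (3 * k) * u - u ^ 2 : ℤ) : L) = 0 := by push_cast; exact hθ
      exact hnr u (Int.cast_eq_zero.mp h4)
    -- w = 3 m / (u/θ - 1) = 3 m θ / (u - θ)
    refine ⟨1 + 2 * k, 3 * (1 + k) * m, 3 * m ^ 2, 3 * m * θ / (u - θ), ?_, ?_, hk⟩
    · push_cast
      have key : 9 * (m : L) * θ ^ 3 + 3 * (1 + 2 * k) * θ ^ 2 * (u - θ)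
          + 3 * (1 + k) * θ * (u - θ) ^ 2 + (u - θ) ^ 3 = 0 := by
        linear_combination (-(u : L)) * hθ + θ ^ 3 * huL
      trans 3 * (m : L) ^ 2 / (u - θ) ^ 3 * (9 * (m : L) * θ ^ 3 + 3 * (1 + 2 * k) * θ ^ 2 * (u - θ)
          + 3 * (1 + k) * θ * (u - θ) ^ 2 + (u - θ) ^ 3)
      · field_simp
        ring
      · rw [key, mul_zero]
    · intro h0
      rw [map_div₀, map_sub, map_mul, map_mul, map_ofNat, map_intCast, map_intCast] at h0
      have hz' : (u : L) - σ θ ≠ 0 := by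
        have := (map_ne_zero σ).mpr hz
        simpa using this
      rw [div_eq_div_iff hz' hz] at h0
      apply hne
      apply mul_left_cancel₀ (mul_ne_zero (mul_ne_zero h3 hm0') hu')
      linear_combination h0
  · obtain ⟨m, hm⟩ := h2.dvd
    obtain ⟨j, hj⟩ : ∃ j, k = 1 + 3 * j := by
      obtain ⟨r, hr⟩ := h1.dvd
      have hu2 : u = 3 * k + 1 - 27 * m := by omega
      rw [hu2] at hr
      refine ⟨-r - k * k + 9 * m * k, ?_⟩
      apply mul_left_cancel₀ (by norm_num : (3 : ℤ) ≠ 0)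
      linear_combination -hr
    have huL : (u : L) = 3 * k + 1 - 27 * m := by
      have : u = 3 * k + 1 - 27 * m := by omega
      rw [this]; push_cast; ring
    refine ⟨2 + 3 * j, 1 + 2 * j, m, (u - θ) / (3 * θ), ?_, ?_, by omega⟩
    · push_cast
      subst hj
      push_cast at hθ huL
      have key : (u - θ) ^ 3 + 3 * (2 + 3 * j) * θ * (u - θ) ^ 2 + 9 * (1 + 2 * j) * θ ^ 2 * (u - θ)
          + 27 * m * θ ^ 3 = 0 := by
        linear_combination (-(u : L)) * hθ + θ ^ 3 * huL
      trans 1 / (27 * θ ^ 3) * ((u - θ) ^ 3 + 3 * (2 + 3 * j) * θ * (u - θ) ^ 2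
          + 9 * (1 + 2 * j) * θ ^ 2 * (u - θ) + 27 * m * θ ^ 3)
      · field_simp
        ring
      · rw [key, mul_zero]
    · intro h0
      rw [map_div₀, map_sub, map_mul, map_ofNat, map_intCast] at h0
      have hz' : σ θ ≠ 0 := (map_ne_zero σ).mpr hθ0
      rw [div_eq_div_iff (by simpa using hz') (by simpa using hθ0)] at h0
      apply hne
      apply mul_left_cancel₀ (mul_ne_zero (by norm_num : (3 : L) ≠ 0) hu')
      linear_combination - h0

theorem km_plus (σ : Gal(L/K)) (h3 : Module.finrank K L = 3) (hσ1 : σ ≠ 1)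
    (u v : ℤ) (hgcd : Int.gcd u v = 1) (θ : L) (hne : σ θ ≠ θ)
    (hθ : θ ^ 3 - u * v * θ - u ^ 2 = 0)
    (hnr : ∀ x : ℤ, x ^ 3 - u * v * x - u ^ 2 ≠ 0)
    (hKM4 : ¬ (3 ∣ v) ∨
      (3 ∣ v ∧ ((¬ u * v ≡ 3 [ZMOD 9] ∧ u ≡ v + 1 [ZMOD 9]) ∨
      (u * v ≡ 3 [ZMOD 9] ∧ u ≡ v + 1 [ZMOD 27])))) :
    3 ∣ NumberField.classNumber K := by
  let s : 𝓞 L ≃+* 𝓞 L := RingOfIntegers.mapRingEquiv (σ : L ≃+* L)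
  have hs : ∀ x, ((s x : 𝓞 L) : L) = σ x := fun x => rfl
  obtain ⟨hgen, hpow, hnorm⟩ := km_univ σ h3 hσ1
  have hs3 : ∀ x, s (s (s x)) = x := by
    intro x
    apply RingOfIntegers.ext
    rw [hs, hs, hs]
    exact DFunLike.congr_fun hpow (x : L)
  have hu : u ≠ 0 := by
    rintro rfl
    exact hnr 0 (by norm_num)
  have hu' : (u : L) ≠ 0 := by exact_mod_cast hu
  have hθ0 : θ ≠ 0 := by
    rintro rfl
    apply hu'
    simpa using hθ
  apply km_general σ h3 hσ1 s hs
  intro P hP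
  by_contra! hcon
  have core : ∀ (a b c : ℤ) (w : L), w ^ 3 + a * w ^ 2 + b * w + c = 0 → σ w ≠ w →
      ∃ W : 𝓞 L, W ^ 3 + a * W ^ 2 + b * W + c = 0 ∧
      (a : 𝓞 L) + 3 * W ∈ P ∧ 3 * W ^ 2 - (b : 𝓞 L) ∈ P := by
    intro a b c w hw hwne
    obtain ⟨W, hW⟩ : ∃ W : 𝓞 L, (W : L) = w := ⟨⟨w, km_integral a b c w hw⟩, rfl⟩
    have hWeq : W ^ 3 + a * W ^ 2 + b * W + c = 0 := by
      apply RingOfIntegers.ext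
      simpa [hW] using hw
    refine ⟨W, hWeq, km_core s hs3 P hcon a b c W hWeq ?_⟩
    intro h
    apply hwne
    rw [← hW, ← hs, h]
  obtain ⟨η, hη, hη1, hη2⟩ := core v 0 (-u) (u / θ) (by
      push_cast
      field_simp
      linear_combination (-(u : L)) * hθ) (by
      intro h0
      rw [map_div₀, map_intCast] at h0
      apply hne
      have hz' : σ θ ≠ 0 := (map_ne_zero σ).mpr hθ0
      rw [div_eq_div_iff hz' hθ0] at h0
      exact (mul_left_cancel₀ hu' h0).symm)
  push_cast at hη hη2
  rw [sub_zero] at hη2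
  have h3P : (3 : 𝓞 L) ∈ P := by
    by_contra h3P
    have hηP : η ∈ P := by
      rcases hP.isPrime.mem_or_mem hη2 with h | h
      · exact absurd h h3P
      · exact hP.isPrime.mem_of_pow_mem _ h
    apply km_int_coprime P hP.ne_top u v hgcd
    · have : (u : 𝓞 L) = (η ^ 2 + v * η) * η := by linear_combination -hη
      rw [this]
      exact P.mul_mem_left _ hηP
    · have := P.sub_mem hη1 (P.mul_mem_left 3 hηP)
      simpa using this
  have h3' : ∀ a : ℤ, ¬ 3 ∣ a → ∀ W : 𝓞 L, (a : 𝓞 L) + 3 * W ∈ P → False := by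
    intro a ha W hW
    apply km_int_coprime P hP.ne_top 3 a (km_three a ha)
    · exact_mod_cast h3P
    · have := P.sub_mem hW (P.mul_mem_right W h3P)
      simpa using this
  rcases hKM4 with h | ⟨h, h'⟩
  · exact h3' v h η hη1
  · obtain ⟨a, b, c, w, hw, hwne, ha⟩ := km_elem (σ : L ≃+* L) u v θ hne hθ0 hu hθ hnr h h'
    obtain ⟨W, -, hW, -⟩ := core a b c w hw hwne
    exact h3' a ha W hW
end

open Polynomial

lemma km_natDegree {F : Type*} [Field F] (a b : F) :
    (X ^ 3 - C a * X - C b : F[X]).natDegree = 3 := by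
  compute_degree!

lemma km_monic {F : Type*} [Field F] (a b : F) :
    (X ^ 3 - C a * X - C b : F[X]).Monic := by
  monicity!

lemma km_no_root (a b : ℚ) (hirr : Irreducible (X ^ 3 - C a * X - C b))
    (K : Type*) [Field K] [NumberField K] (hdeg : ¬ 3 ∣ Module.finrank ℚ K) (x : K) :
    x ^ 3 - algebraMap ℚ K a * x - algebraMap ℚ K b ≠ 0 := by
  intro h
  apply hdeg
  have h1 := minpoly.eq_of_irreducible_of_monic (x := x) hirr (by simpa using h) (km_monic a b)
  have h2 := minpoly.degree_dvd (K := ℚ) (x := x) (Algebra.IsIntegral.isIntegral x)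
  rwa [← h1, km_natDegree] at h2

lemma km_galois {K L : Type*} [Field K] [CharZero K] [Field L] [Algebra K L] (a b : K)
    (hirr : Irreducible (X ^ 3 - C a * X - C b)) (θ : L)
    (hgen : Algebra.adjoin K {θ} = ⊤)
    (hθ : θ ^ 3 - algebraMap K L a * θ - algebraMap K L b = 0)
    (α : K) (hα : α ^ 2 = 4 * a ^ 3 - 27 * b ^ 2) (hα0 : α ≠ 0) : IsGalois K L := by
  have : CharZero L := charZero_of_injective_algebraMap (algebraMap K L).injective
  set A := algebraMap K L a with hA
  set B := algebraMap K L b with hB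
  have hα' : (algebraMap K L α) ^ 2 = 4 * A ^ 3 - 27 * B ^ 2 := by
    rw [← _root_.map_pow, hα, hA, hB]; simp [_root_.map_ofNat]
  have hα0' : algebraMap K L α ≠ 0 := (_root_.map_ne_zero _).mpr hα0
  set β := algebraMap K L α with hβ
  have hk : β ^ 2 = (3 * θ ^ 2 - A) ^ 2 * (4 * A - 3 * θ ^ 2) := by
    rw [hα']
    linear_combination 27 * (θ ^ 3 - A * θ + B) * hθ
  have hd : 3 * θ ^ 2 - A ≠ 0 := by
    intro h0
    apply hα0'
    rw [h0] at hk
    simpa using hk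
  obtain ⟨γ, hγ⟩ : ∃ γ, γ * (3 * θ ^ 2 - A) = β := ⟨β / (3 * θ ^ 2 - A), by field_simp⟩
  have hγ2 : γ ^ 2 = 4 * A - 3 * θ ^ 2 := by
    apply mul_left_cancel₀ (pow_ne_zero 2 hd)
    rw [← hk, ← hγ]; ring
  have hfac : (X ^ 3 - C a * X - C b).map (algebraMap K L) =
      (X - C θ) * ((X - C ((-θ + γ) / 2)) * (X - C ((-θ - γ) / 2))) := by
    have e1 : (C ((-θ + γ) / 2) : L[X]) + C ((-θ - γ) / 2) = - C θ := by
      rw [← C_add, ← C_neg]; congr 1; ring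
    have e2 : (C ((-θ + γ) / 2) : L[X]) * C ((-θ - γ) / 2) = C θ ^ 2 - C A := by
      rw [← C_mul, ← C_pow, ← C_sub]; congr 1; linear_combination (-1/4) * hγ2
    have e3 : C B = (C θ ^ 3 - C A * C θ : L[X]) := by
      rw [← C_pow, ← C_mul, ← C_sub]; congr 1; linear_combination -hθ
    simp only [Polynomial.map_sub, Polynomial.map_mul, Polynomial.map_pow, map_X, map_C]
    rw [← hA, ← hB, e3]
    linear_combination (-(X - C θ)) * e2 + X * (X - C θ) * e1
  have hsp : IsSplittingField K L (X ^ 3 - C a * X - C b) := by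
    refine ⟨?_, ?_⟩
    · rw [hfac]
      exact (Splits.X_sub_C _).mul ((Splits.X_sub_C _).mul (Splits.X_sub_C _))
    · rw [eq_top_iff, ← hgen]
      apply Algebra.adjoin_mono
      rw [Set.singleton_subset_iff, mem_rootSet]
      exact ⟨(km_monic a b).ne_zero, by simpa using hθ⟩
  exact IsGalois.of_separable_splitting_field hirr.separable

theorem km_final
    (u v : ℤ) (D : ℤ) (hD : D = u ^ 3 * (4 * v ^ 3 - 27 * u))
    (hgcd : Int.gcd u v = 1)
    (hirr : Irreducible (X ^ 3 - C ((u : ℚ) * (v : ℚ)) * X - C ((u : ℚ) ^ 2)))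
    (hns : ¬ ∃ s : ℤ, D = s ^ 2)
    (hKM4 : ¬ (3 ∣ v) ∨
      (3 ∣ v ∧ ((¬ u * v ≡ 3 [ZMOD 9] ∧ u ≡ v + 1 [ZMOD 9]) ∨
      (u * v ≡ 3 [ZMOD 9] ∧ u ≡ v + 1 [ZMOD 27]))))
    (K : Type*) [Field K] [NumberField K] (hdeg : Module.finrank ℚ K = 2)
    (hsqrt : ∃ α : K, α ^ 2 = (D : K)) :
    3 ∣ NumberField.classNumber K := by
  obtain ⟨α, hα⟩ := hsqrt
  have hnr : ∀ x : ℤ, x ^ 3 - u * v * x - u ^ 2 ≠ 0 := by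
    intro x hx
    have := km_no_root _ _ hirr ℚ (by simp) (x : ℚ)
    apply this
    simp only [eq_ratCast, Rat.cast_id]
    exact_mod_cast hx
  have hirrK : Irreducible (X ^ 3 - C ((u : K) * (v : K)) * X - C ((u : K) ^ 2)) := by
    apply irreducible_of_degree_le_three_of_not_isRoot
    · rw [km_natDegree]; simp
    · intro x hx
      have := km_no_root _ _ hirr K (by rw [hdeg]; norm_num) x
      apply this
      simpa using hx
  have hmon := km_monic ((u : K) * (v : K)) ((u : K) ^ 2)
  have hnd := km_natDegree ((u : K) * (v : K)) ((u : K) ^ 2)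
  set p : K[X] := X ^ 3 - C ((u : K) * (v : K)) * X - C ((u : K) ^ 2) with hp
  have hfact : Fact (Irreducible p) := ⟨hirrK⟩
  let pb := AdjoinRoot.powerBasis hmon.ne_zero
  have hfd : FiniteDimensional K (AdjoinRoot p) := pb.finite
  have h3 : Module.finrank K (AdjoinRoot p) = 3 := by
    rw [pb.finrank]; exact hnd
  have hcz : CharZero (AdjoinRoot p) :=
    charZero_of_injective_algebraMap (algebraMap K (AdjoinRoot p)).injective
  have hfdQ : FiniteDimensional ℚ (AdjoinRoot p) := FiniteDimensional.trans ℚ K (AdjoinRoot p)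
  have hnf : NumberField (AdjoinRoot p) := ⟨⟩
  have hθ : (AdjoinRoot.root p) ^ 3 - u * v * AdjoinRoot.root p - u ^ 2 = 0 := by
    have key : ∀ q : K[X], q = X ^ 3 - C ((u : K) * (v : K)) * X - C ((u : K) ^ 2) →
        (AdjoinRoot.root q) ^ 3 - u * v * AdjoinRoot.root q - u ^ 2 = 0 := by
      intro q hq
      have h := AdjoinRoot.eval₂_root q
      have h' : eval₂ (AdjoinRoot.of q) (AdjoinRoot.root q)
        (X ^ 3 - C ((u : K) * (v : K)) * X - C ((u : K) ^ 2)) = 0 := by rw [← hq]; exact h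
      simp only [eval₂_sub, eval₂_mul, eval₂_C, eval₂_X, eval₂_pow] at h'
      simpa using h'
    exact key p hp
  have hgal : IsGalois K (AdjoinRoot p) := by
    apply km_galois _ _ hirrK (AdjoinRoot.root p) AdjoinRoot.adjoinRoot_eq_top
      (by simpa using hθ) α
    · rw [hα, hD]; push_cast; ring
    · rintro rfl
      apply hns
      refine ⟨0, ?_⟩
      have : (D : K) = 0 := by rw [← hα]; simp
      simpa using this
  obtain ⟨σ, hσ⟩ : ∃ σ : Gal(AdjoinRoot p/K), σ ≠ 1 := by
    by_contra! hall
    have h1 := IsGalois.card_aut_eq_finrank K (AdjoinRoot p)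
    have : Subsingleton Gal(AdjoinRoot p/K) := ⟨fun a b => by rw [hall a, hall b]⟩
    rw [h3, Nat.card_of_subsingleton 1] at h1
    omega
  have hne : σ (AdjoinRoot.root p) ≠ AdjoinRoot.root p := by
    intro h0
    apply hσ
    have : (σ : AdjoinRoot p →ₐ[K] AdjoinRoot p) = AlgHom.id K _ := AdjoinRoot.algHom_ext h0
    ext x
    exact DFunLike.congr_fun this x
  exact km_plus σ h3 hσ u v hgcd (AdjoinRoot.root p) hne hθ hnr hKM4

theorem kishi_miyake_class_number_div_three
    (u v : ℤ) (D : ℤ) (hD : D = u ^ 3 * (4 * v ^ 3 - 27 * u))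
    (hgcd : Int.gcd u v = 1)
    (hirr : Irreducible (X ^ 3 - C ((u : ℚ) * (v : ℚ)) * X - C ((u : ℚ) ^ 2)))
    (hns : ¬ ∃ s : ℤ, D = s ^ 2)
    (hKM4 : ¬ (3 ∣ v) ∨
      (3 ∣ v ∧ ¬ u * v ≡ 3 [ZMOD 9] ∧ (u ≡ v + 1 [ZMOD 9] ∨ u ≡ v - 1 [ZMOD 9])) ∨
      (3 ∣ v ∧ u * v ≡ 3 [ZMOD 9] ∧ (u ≡ v + 1 [ZMOD 27] ∨ u ≡ v - 1 [ZMOD 27])))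
    (K : Type*) [Field K] [NumberField K] (hdeg : Module.finrank ℚ K = 2)
    (hsqrt : ∃ α : K, α ^ 2 = (D : K)) :
    3 ∣ NumberField.classNumber K := by
  have plus := fun h => km_final u v D hD hgcd hirr hns h K hdeg hsqrt
  have minus := fun h => km_final (-u) (-v) D (by rw [hD]; ring) (by simpa using hgcd)
    (by simpa using hirr) hns h K hdeg hsqrt
  rw [neg_mul_neg] at minus
  have hneg : ∀ n : ℤ, u ≡ v - 1 [ZMOD n] → -u ≡ -v + 1 [ZMOD n] := by
    intro n h
    have := h.neg
    rwa [neg_sub, sub_eq_neg_add] at this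
  rcases hKM4 with h | ⟨h, h1, h2 | h2⟩ | ⟨h, h1, h2 | h2⟩
  · exact plus (Or.inl h)
  · exact plus (Or.inr ⟨h, Or.inl ⟨h1, h2⟩⟩)
  · exact minus (Or.inr ⟨(dvd_neg).mpr h, Or.inl ⟨h1, hneg _ h2⟩⟩)
  · exact plus (Or.inr ⟨h, Or.inr ⟨h1, h2⟩⟩)
  · exact minus (Or.inr ⟨(dvd_neg).mpr h, Or.inr ⟨h1, hneg _ h2⟩⟩)
end

section
/- Let a and b be integers such that g(X) = X³ − aX − b is irreducible over ℚ and such that either 3² ∤ a or 3³ ∤ b. Let θ be a root of g and let K = ℚ(θ). Then the prime 3 is totally ramified in K/ℚ (i.e., 3·O_K = 𝔓³ for a prime ideal 𝔓 of O_K) if and only if one of the following holds: (LN-1) 1 ≤ v₃(b) ≤ v₃(a); (LN-2) 3 ∣ a, a ≢ 3 (mod 9), 3 ∤ b, and b² ≢ a + 1 (mod 9); (LN-3) a ≡ 3 (mod 9), 3 ∤ b, and b² ≢ a + 1 (mod 27). -/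
open Polynomial

namespace LN

open NumberField

variable {K : Type*} [Field K] [NumberField K]

theorem enat_aux (x : ℕ∞) (k : ℕ) (h : x < ((k + 1 : ℕ) : ℕ∞)) : x ≤ k := by
  cases x with
  | top => simp at h
  | coe m =>
    have : m < k + 1 := by exact_mod_cast h
    exact_mod_cast Nat.le_of_lt_succ this

theorem integrality (hdeg : Module.finrank ℚ K = 3) (γ : 𝓞 K)
    (hγ : ∀ x : ℚ, algebraMap ℚ K x ≠ (γ : K)) (A B D : ℤ)
    (h : 27 * γ ^ 3 + 9 * (A : 𝓞 K) * γ ^ 2 + 3 * (B : 𝓞 K) * γ + (D : 𝓞 K) = 0) :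
    3 ∣ A ∧ 9 ∣ B := by
  have hK : 27 * (γ : K) ^ 3 + 9 * (A : K) * (γ : K) ^ 2 + 3 * (B : K) * (γ : K) + (D : K) = 0 := by
    have := congrArg (algebraMap (𝓞 K) K) h
    simp only [map_add, map_mul, map_pow, map_intCast, map_zero] at this
    exact this
  have hiZ : IsIntegral ℤ (γ : K) := γ.isIntegral_coe
  have hiQ : IsIntegral ℚ (γ : K) := Algebra.IsIntegral.isIntegral _
  have hd : (minpoly ℚ (γ : K)).natDegree = 3 := by
    have h1 := minpoly.degree_dvd hiQ
    rw [hdeg] at h1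
    rcases (Nat.dvd_prime Nat.prime_three).1 h1 with h2 | h2
    · rw [minpoly.natDegree_eq_one_iff] at h2
      obtain ⟨x, hx⟩ := h2
      exact absurd hx (hγ x)
    · exact h2
  set f : ℚ[X] := X ^ 3 + C ((A : ℚ) / 3) * X ^ 2 + C ((B : ℚ) / 9) * X + C ((D : ℚ) / 27) with hf
  have hfm : f.Monic := by rw [hf]; monicity!
  have hfd : f.natDegree = 3 := by rw [hf]; compute_degree!
  have hfr : aeval (γ : K) f = 0 := by
    rw [hf]
    simp only [map_add, map_mul, map_pow, aeval_X, aeval_C, map_div₀, map_intCast, map_ofNat]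
    field_simp
    linear_combination 27 * hK
  have hfe : f = minpoly ℚ (γ : K) :=
    eq_of_monic_of_dvd_of_natDegree_le (minpoly.monic hiQ) hfm (minpoly.dvd ℚ _ hfr)
      (by rw [hfd, hd])
  rw [minpoly.isIntegrallyClosed_eq_field_fractions' ℚ hiZ] at hfe
  have h2 := congrArg (fun p => coeff p 2) hfe
  have h1 := congrArg (fun p => coeff p 1) hfe
  simp [hf, coeff_C] at h2 h1
  constructor
  · refine ⟨(minpoly ℤ (γ : K)).coeff 2, ?_⟩
    have : (A : ℚ) = 3 * ((minpoly ℤ (γ : K)).coeff 2 : ℤ) := by rw [← h2]; ring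
    exact_mod_cast this
  · refine ⟨(minpoly ℤ (γ : K)).coeff 1, ?_⟩
    have : (B : ℚ) = 9 * ((minpoly ℤ (γ : K)).coeff 1 : ℤ) := by rw [← h1]; ring
    exact_mod_cast this

theorem norm3 (hdeg : Module.finrank ℚ K = 3) (P : Ideal (𝓞 K))
    (h3 : Ideal.span {(3 : 𝓞 K)} = P ^ 3) : Ideal.absNorm P = 3 := by
  have h := congrArg Ideal.absNorm h3
  have h' : (3 : 𝓞 K) = algebraMap ℤ (𝓞 K) 3 := by simp
  rw [Ideal.absNorm_span_singleton, h', Algebra.norm_algebraMap, RingOfIntegers.rank, hdeg,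
    map_pow] at h
  have h2 : (Ideal.absNorm P) ^ 3 = 3 ^ 3 := by rw [← h]; rfl
  exact Nat.pow_left_injective (n := 3) (by norm_num) h2

theorem exists_residue (hdeg : Module.finrank ℚ K = 3) (P : Ideal (𝓞 K)) (hP : P.IsPrime)
    (h3 : Ideal.span {(3 : 𝓞 K)} = P ^ 3) (x : 𝓞 K) : ∃ n : ℤ, x - (n : 𝓞 K) ∈ P := by
  have hn := norm3 hdeg P h3
  rw [Ideal.absNorm_apply, Submodule.cardQuot_apply] at hn
  have : Fact (Nat.Prime 3) := ⟨Nat.prime_three⟩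
  have h1 : (1 : 𝓞 K ⧸ P) ≠ 0 := by
    have := Ideal.Quotient.nontrivial_iff.2 hP.ne_top
    exact one_ne_zero
  obtain ⟨n, hn⟩ := mem_zmultiples_of_prime_card hn (g := (1 : 𝓞 K ⧸ P))
    (g' := Ideal.Quotient.mk P x) h1
  refine ⟨n, ?_⟩
  rw [← Ideal.Quotient.eq, ← hn]
  simp

theorem eis1 (hdeg : Module.finrank ℚ K = 3) (α : 𝓞 K) (p q r : ℤ)
    (h : α ^ 3 + 3 * (p : 𝓞 K) * α ^ 2 + 3 * (q : 𝓞 K) * α + 3 * (r : 𝓞 K) = 0)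
    (hr : ¬ 3 ∣ r) :
    ∃ P : Ideal (𝓞 K), P.IsPrime ∧ Ideal.span {(3 : 𝓞 K)} = P ^ 3 := by
  set P : Ideal (𝓞 K) := Ideal.span {3, α} with hPdef
  have m3 : (3 : 𝓞 K) ∈ P := Ideal.subset_span (by simp)
  have mα : α ∈ P := Ideal.subset_span (by simp)
  obtain ⟨u, v, huv⟩ : ∃ u v : ℤ, u * 3 + v * r = 1 := by
    have : IsCoprime (3 : ℤ) r := (Int.prime_three.coprime_iff_not_dvd).2 hr
    exact this
  have huv' : (u : 𝓞 K) * 3 + v * r = 1 := by exact_mod_cast congrArg (Int.cast : ℤ → 𝓞 K) huv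
  have key : (3 : 𝓞 K) = u * (3 * 3) - v * α ^ 3 - (v * p) * (3 * α * α) - (v * q) * (3 * α) := by
    linear_combination (-3 : 𝓞 K) * huv' + v * h
  have m2 : (3 : 𝓞 K) ∈ P ^ 2 := by
    rw [key]
    have a1 : (3 * 3 : 𝓞 K) ∈ P ^ 2 := by rw [pow_two]; exact Ideal.mul_mem_mul m3 m3
    have a2 : (3 * α : 𝓞 K) ∈ P ^ 2 := by rw [pow_two]; exact Ideal.mul_mem_mul m3 mα
    have a3 : α ^ 3 ∈ P ^ 2 := Ideal.pow_le_pow_right (by norm_num) (Ideal.pow_mem_pow mα 3)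
    exact sub_mem (sub_mem (sub_mem (Ideal.mul_mem_left _ _ a1) (Ideal.mul_mem_left _ _ a3))
      (Ideal.mul_mem_left _ _ (Ideal.mul_mem_right _ _ a2))) (Ideal.mul_mem_left _ _ a2)
  have m33 : (3 : 𝓞 K) ∈ P ^ 3 := by
    rw [key]
    have a1 : (3 * 3 : 𝓞 K) ∈ P ^ 3 := by rw [pow_succ]; exact Ideal.mul_mem_mul m2 m3
    have a2 : (3 * α : 𝓞 K) ∈ P ^ 3 := by rw [pow_succ]; exact Ideal.mul_mem_mul m2 mα
    have a3 : α ^ 3 ∈ P ^ 3 := Ideal.pow_mem_pow mα 3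
    exact sub_mem (sub_mem (sub_mem (Ideal.mul_mem_left _ _ a1) (Ideal.mul_mem_left _ _ a3))
      (Ideal.mul_mem_left _ _ (Ideal.mul_mem_right _ _ a2))) (Ideal.mul_mem_left _ _ a2)
  have heq : Ideal.span {(3 : 𝓞 K)} = P ^ 3 := by
    apply le_antisymm
    · rw [Ideal.span_singleton_le_iff_mem]; exact m33
    · have hα3 : α ^ 3 ∈ Ideal.span {(3 : 𝓞 K)} := by
        rw [Ideal.mem_span_singleton]
        exact ⟨-(p * α ^ 2 + q * α + r), by linear_combination h⟩
      have h3m : (3 : 𝓞 K) ∈ Ideal.span {(3 : 𝓞 K)} := Ideal.mem_span_singleton_self _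
      rw [hPdef, pow_succ, pow_two, Ideal.span_pair_mul_span_pair, Ideal.span_mul_span',
        Ideal.span_le]
      rintro x hx
      simp only [Set.mem_mul, Set.mem_insert_iff, Set.mem_singleton_iff] at hx
      obtain ⟨y, hy, z, hz, rfl⟩ := hx
      simp only [SetLike.mem_coe]
      rcases hy with rfl | rfl | rfl | rfl <;> rcases hz with rfl | rfl
      on_goal 8 => convert hα3 using 1; ring
      all_goals
        rw [Ideal.mem_span_singleton]
        first
          | exact Dvd.intro_left _ rfl
          | (refine Dvd.dvd.mul_right ?_ _
             first
              | exact Dvd.intro_left _ rfl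
              | exact Dvd.intro _ rfl)
  refine ⟨P, ?_, heq⟩
  apply Ideal.isPrime_of_irreducible_absNorm
  rw [norm3 hdeg P heq]
  exact Nat.prime_three

theorem eis2 (hdeg : Module.finrank ℚ K = 3) (α : 𝓞 K) (p q r : ℤ)
    (h : α ^ 3 + 3 * (p : 𝓞 K) * α ^ 2 + 9 * (q : 𝓞 K) * α + 9 * (r : 𝓞 K) = 0)
    (hr : ¬ 3 ∣ r) :
    ∃ P : Ideal (𝓞 K), P.IsPrime ∧ Ideal.span {(3 : 𝓞 K)} = P ^ 3 := by
  have hK : (α : K) ^ 3 + 3 * (p : K) * (α : K) ^ 2 + 9 * (q : K) * (α : K) + 9 * (r : K) = 0 := by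
    have := congrArg (algebraMap (𝓞 K) K) h
    simp only [map_add, map_mul, map_pow, map_intCast, map_zero] at this
    exact this
  set g : K := (α : K) ^ 2 / 3 with hg
  have hs : (α : K) ^ 2 = 3 * g := by rw [hg]; field_simp
  have hgr : g ^ 3 + 3 * (2 * q - p ^ 2 : ℤ) * g ^ 2 + 3 * (3 * q ^ 2 - 2 * p * r : ℤ) * g
      + 3 * (- r ^ 2 : ℤ) = 0 := by
    rw [hg]
    push_cast
    field_simp
    linear_combination ((α : K) ^ 3 + 9 * q * α - 3 * p * (α : K) ^ 2 - 9 * r) * hK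
  have hint : IsIntegral ℤ g := by
    refine ⟨X ^ 3 + C (3 * (2 * q - p ^ 2)) * X ^ 2 + C (3 * (3 * q ^ 2 - 2 * p * r)) * X
      + C (3 * (- r ^ 2)), by monicity!, ?_⟩
    rw [← aeval_def]
    simp only [map_add, map_mul, map_pow, aeval_X, aeval_C, map_sub, map_neg]
    push_cast at hgr
    simpa using hgr
  let γ : 𝓞 K := ⟨g, hint⟩
  refine eis1 hdeg γ (2 * q - p ^ 2) (3 * q ^ 2 - 2 * p * r) (- r ^ 2) ?_ ?_
  · apply RingOfIntegers.coe_injective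
    have : algebraMap (𝓞 K) K γ = g := rfl
    rw [← this] at hgr
    simp only [map_add, map_mul, map_pow, map_intCast, map_zero]
    exact hgr
  · rw [dvd_neg]
    exact fun hh => hr (Int.prime_three.dvd_of_dvd_pow hh)

theorem ram (hdeg : Module.finrank ℚ K = 3) (P : Ideal (𝓞 K)) (hP : P.IsPrime)
    (h3 : Ideal.span {(3 : 𝓞 K)} = P ^ 3) (β : 𝓞 K) (hβ : β ∈ P)
    (hβQ : ∀ x : ℚ, algebraMap ℚ K x ≠ (β : K)) (p q r : ℤ)
    (h : β ^ 3 + (p : 𝓞 K) * β ^ 2 + (q : 𝓞 K) * β + (r : 𝓞 K) = 0) :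
    3 ∣ p ∧ 3 ∣ q ∧ (9 ∣ r → 9 ∣ q) := by
  have m33 : (3 : 𝓞 K) ∈ P ^ 3 := by rw [← h3]; exact Ideal.mem_span_singleton_self _
  have m3 : (3 : 𝓞 K) ∈ P := Ideal.pow_le_self (by norm_num) m33
  have hP0 : P ≠ ⊥ := by
    rintro rfl
    rw [Ideal.mem_bot] at m3
    norm_num at m3
  have hPp : Prime P := Ideal.prime_of_isPrime hP0 hP
  have mono : ∀ {i j : ℕ} {x : 𝓞 K}, x ∈ P ^ i → j ≤ i → x ∈ P ^ j :=
    fun hx hij => Ideal.pow_le_pow_right hij hx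
  have mulm : ∀ {i j : ℕ} {x y : 𝓞 K}, x ∈ P ^ i → y ∈ P ^ j → x * y ∈ P ^ (i + j) := by
    intro i j x y hx hy
    rw [pow_add]; exact Ideal.mul_mem_mul hx hy
  have intP : ∀ n : ℤ, (n : 𝓞 K) ∈ P → 3 ∣ n := by
    intro n hn
    by_contra hc
    obtain ⟨u, v, huv⟩ : IsCoprime (3 : ℤ) n := (Int.prime_three.coprime_iff_not_dvd).2 hc
    have huv' : (u : 𝓞 K) * 3 + v * n = 1 := by
      exact_mod_cast congrArg (Int.cast : ℤ → 𝓞 K) huv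
    apply hP.ne_top
    rw [Ideal.eq_top_iff_one, ← huv']
    exact add_mem (Ideal.mul_mem_left _ _ m3) (Ideal.mul_mem_left _ _ hn)
  have int3 : ∀ n : ℤ, 3 ∣ n → (n : 𝓞 K) ∈ P ^ 3 := by
    rintro n ⟨m, rfl⟩
    push_cast
    exact Ideal.mul_mem_right _ _ m33
  have int9 : ∀ n : ℤ, 9 ∣ n → (n : 𝓞 K) ∈ P ^ 6 := by
    rintro n ⟨m, rfl⟩
    have e : (((9 * m : ℤ)) : 𝓞 K) = (3 * 3) * m := by push_cast; ring
    rw [e]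
    exact Ideal.mul_mem_right _ _ (mulm m33 m33)
  have cancel3 : ∀ (k : ℕ) (x : 𝓞 K), 3 * x ∈ P ^ (3 + k) → x ∈ P ^ k := by
    intro k x hx
    rw [← Ideal.dvd_span_singleton] at hx ⊢
    rw [← Ideal.span_singleton_mul_span_singleton, h3, pow_add] at hx
    exact (mul_dvd_mul_iff_left (pow_ne_zero 3 hP0)).1 hx
  have powl : ∀ (m : ℕ), β ^ m ∈ P ^ (m + 1) → β ∈ P ^ 2 := by
    intro m hm
    rw [← Ideal.dvd_span_singleton] at hm ⊢
    rw [← Ideal.span_singleton_pow, pow_dvd_iff_le_emultiplicity, emultiplicity_pow hPp] at hm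
    by_contra hc
    rw [pow_dvd_iff_le_emultiplicity, not_le] at hc
    have h1 : emultiplicity P (Ideal.span {β}) ≤ 1 := by
      exact_mod_cast enat_aux _ 1 hc
    have h2 : (m : ℕ∞) * emultiplicity P (Ideal.span {β}) ≤ m * 1 := by gcongr
    have h4 := hm.trans h2
    rw [mul_one] at h4
    have : m + 1 ≤ m := by exact_mod_cast h4
    omega
  have unitl : ∀ (n : ℤ) (k : ℕ) (x : 𝓞 K), ¬ 3 ∣ n → (n : 𝓞 K) * x ∈ P ^ k → x ∈ P ^ k := by
    intro n k x hn hx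
    rcases Ideal.IsPrime.mul_mem_pow P hx with h1 | h1
    · exact absurd (intP n h1) hn
    · exact h1
  have fin : β ∈ P ^ 3 → 3 ∣ p ∧ 9 ∣ q := by
    intro hb
    rw [← h3, Ideal.mem_span_singleton] at hb
    obtain ⟨γ, rfl⟩ := hb
    refine integrality hdeg γ ?_ p q r ?_
    · intro x hx
      apply hβQ (3 * x)
      have e : ((3 * γ : 𝓞 K) : K) = 3 * (γ : K) := map_mul (algebraMap (𝓞 K) K) 3 γ
      rw [map_mul, hx, e, map_ofNat]
    · linear_combination h
  have b1 : β ∈ P ^ 1 := by simpa using hβ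
  have b2 : β ^ 2 ∈ P ^ 2 := Ideal.pow_mem_pow hβ 2
  have b3 : β ^ 3 ∈ P ^ 3 := Ideal.pow_mem_pow hβ 3
  have c2 : β ∈ P ^ 2 → β ^ 2 ∈ P ^ 4 := fun hb => by rw [pow_two]; exact mulm hb hb
  have c3 : β ∈ P ^ 2 → β ^ 3 ∈ P ^ 6 := fun hb => by rw [pow_succ β]; exact mulm (c2 hb) hb
  have er : (r : 𝓞 K) = -(β ^ 3 + p * β ^ 2 + q * β) := by linear_combination h
  have eq : (q : 𝓞 K) * β = -(β ^ 3 + p * β ^ 2 + r) := by linear_combination h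
  have ep : (p : 𝓞 K) * β ^ 2 = -(β ^ 3 + q * β + r) := by linear_combination h
  have e3 : β ^ 3 = -(p * β ^ 2 + q * β + r) := by linear_combination h
  have hr : 3 ∣ r := by
    apply intP
    rw [er]
    exact neg_mem (add_mem (add_mem (Ideal.pow_le_self (by norm_num) b3)
      (Ideal.mul_mem_left _ _ (Ideal.pow_le_self (by norm_num) b2))) (Ideal.mul_mem_left _ _ hβ))
  have r3 := int3 r hr
  have hq : 3 ∣ q := by
    by_contra hq
    have hb2 : β ∈ P ^ 2 := by
      apply unitl q 2 β hq
      rw [eq]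
      exact neg_mem (add_mem (add_mem (mono b3 (by norm_num)) (Ideal.mul_mem_left _ _ b2))
        (mono r3 (by norm_num)))
    have hb3 : β ∈ P ^ 3 := by
      apply unitl q 3 β hq
      rw [eq]
      exact neg_mem (add_mem (add_mem b3 (Ideal.mul_mem_left _ _ (mono (c2 hb2) (by norm_num)))) r3)
    have := (fin hb3).2
    omega
  have q3 := int3 q hq
  have r9 : β ∈ P ^ 2 → 9 ∣ r := by
    intro hb2
    obtain ⟨s, rfl⟩ := hr
    have : 3 ∣ s := by
      apply intP
      have := cancel3 1 (s : 𝓞 K) (by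
        have e : (3 : 𝓞 K) * s = ((3 * s : ℤ) : 𝓞 K) := by push_cast; ring
        rw [e, er]
        exact neg_mem (add_mem (add_mem (mono (c3 hb2) (by norm_num))
          (Ideal.mul_mem_left _ _ (c2 hb2))) (mono (mulm q3 b1) (by norm_num))))
      simpa using this
    omega
  have hp : 3 ∣ p := by
    by_contra hp
    have hb2 : β ∈ P ^ 2 := by
      apply powl 2
      apply unitl p 3 _ hp
      rw [ep]
      exact neg_mem (add_mem (add_mem b3 (mono (mulm q3 b1) (by norm_num))) r3)
    have hb : β ^ 2 ∈ P ^ 5 := by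
      apply unitl p 5 _ hp
      rw [ep]
      exact neg_mem (add_mem (add_mem (mono (c3 hb2) (by norm_num)) (mulm q3 hb2))
        (mono (int9 r (r9 hb2)) (by norm_num)))
    have hb3 : β ∈ P ^ 3 := by
      rw [← Ideal.dvd_span_singleton] at hb ⊢
      rw [← Ideal.span_singleton_pow, pow_dvd_iff_le_emultiplicity, emultiplicity_pow hPp] at hb
      by_contra hc
      rw [pow_dvd_iff_le_emultiplicity, not_le] at hc
      have h1 : emultiplicity P (Ideal.span {β}) ≤ 2 := by
        exact_mod_cast enat_aux _ 2 hc
      have h2 : ((2 : ℕ) : ℕ∞) * emultiplicity P (Ideal.span {β}) ≤ (2 : ℕ) * 2 := by gcongr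
      have h4 := hb.trans h2
      have : 5 ≤ 2 * 2 := by exact_mod_cast h4
      omega
    exact hp (fin hb3).1
  refine ⟨hp, hq, fun h9 => ?_⟩
  by_contra hq9
  have p3 := int3 p hp
  have r6 := int9 r h9
  have hb2 : β ∈ P ^ 2 := by
    apply powl 3
    rw [e3]
    exact neg_mem (add_mem (add_mem (mono (mulm p3 b2) (by norm_num)) (mulm q3 b1))
      (mono r6 (by norm_num)))
  obtain ⟨t, rfl⟩ := hq
  have hb3 : β ∈ P ^ 3 := by
    apply unitl t 3 β (by omega)
    apply cancel3 3
    have e : (3 : 𝓞 K) * (t * β) = ((3 * t : ℤ) : 𝓞 K) * β := by push_cast; ring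
    rw [e, eq]
    exact neg_mem (add_mem (add_mem (c3 hb2) (mono (mulm p3 (c2 hb2)) (by norm_num))) r6)
  exact hq9 (fin hb3).2

end LN

/-- Llorente–Nart criterion: let `g(X) = X³ - aX - b ∈ ℤ[X]` be irreducible over `ℚ` with
`3² ∤ a` or `3³ ∤ b`, let `θ` be a root of `g` and `K = ℚ(θ)`.  Then `3` is totally
ramified in `K/ℚ` if and only if one of (LN-1), (LN-2), (LN-3) holds. -/
theorem three_totally_ramified_iff_llorente_nart
    (a b : ℤ) (hirr : Irreducible (X ^ 3 - C (a : ℚ) * X - C (b : ℚ)))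
    (hval : ¬ ((9 : ℤ) ∣ a) ∨ ¬ ((27 : ℤ) ∣ b))
    (K : Type*) [Field K] [NumberField K] (hdeg : Module.finrank ℚ K = 3)
    (θ : K) (hθ : θ ^ 3 - (a : K) * θ - (b : K) = 0) :
    (∃ P : Ideal (NumberField.RingOfIntegers K), P.IsPrime ∧
        Ideal.span {(3 : NumberField.RingOfIntegers K)} = P ^ 3) ↔
      (1 ≤ emultiplicity (3 : ℤ) b ∧ emultiplicity (3 : ℤ) b ≤ emultiplicity (3 : ℤ) a) ∨
      (3 ∣ a ∧ ¬ a ≡ 3 [ZMOD 9] ∧ ¬ (3 ∣ b) ∧ ¬ b ^ 2 ≡ a + 1 [ZMOD 9]) ∨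
      (a ≡ 3 [ZMOD 9] ∧ ¬ (3 ∣ b) ∧ ¬ b ^ 2 ≡ a + 1 [ZMOD 27]) := by
  -- `θ` is irrational
  have hθQ : ∀ x : ℚ, algebraMap ℚ K x ≠ θ := by
    rintro x rfl
    have hx : x ^ 3 - a * x - b = 0 := by
      apply (algebraMap ℚ K).injective
      simpa using hθ
    have hr := degree_eq_one_of_irreducible_of_root hirr (x := x) (by simp [hx])
    have : (X ^ 3 - C (a : ℚ) * X - C (b : ℚ)).degree = 3 := by compute_degree!
    rw [this] at hr
    exact absurd hr (by decide)
  have hint : IsIntegral ℤ θ := by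
    refine ⟨X ^ 3 - C a * X - C b, by monicity!, ?_⟩
    rw [← aeval_def]
    simpa using hθ
  obtain ⟨α, hα⟩ : ∃ α : NumberField.RingOfIntegers K,
      algebraMap (NumberField.RingOfIntegers K) K α = θ := ⟨⟨θ, hint⟩, rfl⟩
  have h0 : α ^ 3 - (a : NumberField.RingOfIntegers K) * α - b = 0 := by
    apply NumberField.RingOfIntegers.coe_injective
    simpa [hα] using hθ
  have hsub : ∀ (n : ℤ) (x : ℚ), algebraMap ℚ K x ≠
      ((α - (n : NumberField.RingOfIntegers K) : NumberField.RingOfIntegers K) : K) := by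
    intro n x hx
    apply hθQ (x + n)
    have e := map_sub (algebraMap (NumberField.RingOfIntegers K) K) α n
    rw [hα, map_intCast] at e
    rw [map_add, hx, map_intCast]
    linear_combination e
  have hc : b ^ 2 - a - 1 = b ^ 2 - (a + 1) := by ring
  -- elementary form of (LN-1)
  have hLN : (1 ≤ emultiplicity (3 : ℤ) b ∧ emultiplicity (3 : ℤ) b ≤ emultiplicity (3 : ℤ) a) ↔
      (3 ∣ b ∧ 3 ∣ a ∧ (9 ∣ b → 9 ∣ a)) := by
    have h1 : 1 ≤ emultiplicity (3 : ℤ) b ↔ 3 ∣ b := by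
      have := pow_dvd_iff_le_emultiplicity (a := (3 : ℤ)) (b := b) (k := 1)
      simpa using this.symm
    rw [h1, emultiplicity_le_emultiplicity_iff]
    constructor
    · rintro ⟨h, h'⟩
      have e1 := h' 1
      have e2 := h' 2
      norm_num at e1 e2
      exact ⟨h, e1 h, e2⟩
    · rintro ⟨h, ha, h9⟩
      refine ⟨h, fun n hn => ?_⟩
      match n, hn with
      | 0, _ => simp
      | 1, _ => simpa using ha
      | 2, hn => norm_num at hn ⊢; exact h9 hn
      | k + 3, hn =>
        exfalso
        have h27 : (27 : ℤ) ∣ b := by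
          refine dvd_trans ?_ hn
          exact ⟨3 ^ k, by ring⟩
        have : 9 ∣ a := h9 (by omega)
        tauto
  rw [hLN]
  have hy : ∀ n : ℤ, (α - n) ^ 3 + ((3 * n : ℤ) : NumberField.RingOfIntegers K) * (α - n) ^ 2
      + ((3 * n ^ 2 - a : ℤ) : NumberField.RingOfIntegers K) * (α - n)
      + ((n ^ 3 - a * n - b : ℤ) : NumberField.RingOfIntegers K) = 0 := by
    intro n
    push_cast
    linear_combination h0
  have hbsq : ¬ 3 ∣ b → b ^ 2 % 3 = 1 := by
    intro hb
    rcases (by omega : b % 3 = 1 ∨ b % 3 = 2) with h | h <;> simp [pow_two, Int.mul_emod, h]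
  have hbig : b ^ 3 - a * b - b = b * (b ^ 2 - a - 1) := by ring
  constructor
  · rintro ⟨P, hP, h3⟩
    have m33 : (3 : NumberField.RingOfIntegers K) ∈ P ^ 3 := by
      rw [← h3]; exact Ideal.mem_span_singleton_self _
    have m3 : (3 : NumberField.RingOfIntegers K) ∈ P := Ideal.pow_le_self (by norm_num) m33
    have intm : ∀ n : ℤ, 3 ∣ n → (n : NumberField.RingOfIntegers K) ∈ P := by
      rintro n ⟨m, rfl⟩
      push_cast
      exact Ideal.mul_mem_right _ _ m3
    have ha : 3 ∣ a := by
      obtain ⟨n, hn⟩ := LN.exists_residue hdeg P hP h3 α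
      have := (LN.ram hdeg P hP h3 _ hn (hsub n) _ _ _ (hy n)).2.1
      have h2 : (3 : ℤ) ∣ 3 * n ^ 2 := Dvd.intro _ rfl
      omega
    by_cases hb : 3 ∣ b
    · left
      refine ⟨hb, ha, fun h9 => ?_⟩
      have hm : α - ((0 : ℤ) : NumberField.RingOfIntegers K) ∈ P := by
        apply hP.mem_of_pow_mem 3
        have e : (α - ((0 : ℤ) : NumberField.RingOfIntegers K)) ^ 3 = a * α + b := by
          push_cast
          linear_combination h0
        rw [e]
        exact add_mem (Ideal.mul_mem_right _ _ (intm a ha)) (intm b hb)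
      have := (LN.ram hdeg P hP h3 _ hm (hsub 0) _ _ _ (hy 0)).2.2 (by simpa using h9)
      simpa using this
    · right
      have hb2 := hbsq hb
      have hm : α - (b : NumberField.RingOfIntegers K) ∈ P := by
        apply hP.mem_of_pow_mem 3
        have e : (α - (b : NumberField.RingOfIntegers K)) ^ 3
            = -(((3 * b : ℤ) : NumberField.RingOfIntegers K) * (α - b) ^ 2
              + ((3 * b ^ 2 - a : ℤ) : NumberField.RingOfIntegers K) * (α - b)
              + ((b ^ 3 - a * b - b : ℤ) : NumberField.RingOfIntegers K)) := by
          linear_combination hy b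
        rw [e]
        refine neg_mem (add_mem (add_mem (Ideal.mul_mem_right _ _ (intm _ (Dvd.intro _ rfl)))
          (Ideal.mul_mem_right _ _ (intm _ (by omega)))) (intm _ ?_))
        rw [hbig]
        exact Dvd.dvd.mul_left (by omega) b
      have hR := (LN.ram hdeg P hP h3 _ hm (hsub b) _ _ _ (hy b)).2.2
      by_cases ha3 : a ≡ 3 [ZMOD 9]
      · right
        refine ⟨ha3, hb, fun hcon => ?_⟩
        unfold Int.ModEq at ha3 hcon
        -- divide by 3
        obtain ⟨q', hq'⟩ : 9 ∣ 3 * b ^ 2 - a := by omega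
        obtain ⟨r', hr'⟩ : 27 ∣ b ^ 3 - a * b - b := by
          rw [hbig]; exact Dvd.dvd.mul_left (by omega) b
        have hyb := hy b
        rw [hq', hr'] at hyb
        have hyK := congrArg (algebraMap (NumberField.RingOfIntegers K) K) hyb
        simp only [map_add, map_mul, map_pow, map_sub, map_intCast, hα, map_zero] at hyK
        have hzr : ((θ - b) / 3) ^ 3 + (b : K) * ((θ - b) / 3) ^ 2 + (q' : K) * ((θ - b) / 3)
            + (r' : K) = 0 := by
          field_simp
          push_cast at hyK
          linear_combination hyK
        have hzi : IsIntegral ℤ ((θ - b) / 3) := by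
          refine ⟨X ^ 3 + C b * X ^ 2 + C q' * X + C r', by monicity!, ?_⟩
          rw [← aeval_def]
          simpa using hzr
        obtain ⟨z, hz⟩ : ∃ z : NumberField.RingOfIntegers K,
          algebraMap (NumberField.RingOfIntegers K) K z = (θ - b) / 3 := ⟨⟨_, hzi⟩, rfl⟩
        have hz0 : z ^ 3 + (b : NumberField.RingOfIntegers K) * z ^ 2 + q' * z + r' = 0 := by
          apply NumberField.RingOfIntegers.coe_injective
          simpa [hz] using hzr
        obtain ⟨n, hn⟩ := LN.exists_residue hdeg P hP h3 z
        have := (LN.ram hdeg P hP h3 _ hn (by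
          intro x hx
          apply hθQ (3 * (x + n) + b)
          simp only [map_add, map_mul, hx, map_sub, hz, map_intCast, map_ofNat]
          field_simp
          ring) (b + 3 * n) (q' + 2 * b * n + 3 * n ^ 2) (r' + q' * n + b * n ^ 2 + n ^ 3) (by
            push_cast
            linear_combination hz0)).1
        omega
      · left
        refine ⟨ha, ha3, hb, fun hcon => ?_⟩
        unfold Int.ModEq at ha3 hcon
        have := hR (by rw [hbig]; exact Dvd.dvd.mul_left (by omega) b)
        omega
  · -- Eisenstein shifts
    have E1 : 3 ∣ a → ¬ 3 ∣ b → ¬ 9 ∣ b ^ 2 - a - 1 →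
        ∃ P : Ideal (NumberField.RingOfIntegers K), P.IsPrime ∧
        Ideal.span {(3 : NumberField.RingOfIntegers K)} = P ^ 3 := by
      intro ha hb h9
      have hb2 := hbsq hb
      obtain ⟨q', hq'⟩ : 3 ∣ 3 * b ^ 2 - a := by omega
      obtain ⟨s, hs⟩ : 3 ∣ b ^ 2 - a - 1 := by omega
      have hyb := hy b
      rw [hq', hbig, hs] at hyb
      refine LN.eis1 hdeg (α - b) b q' (b * s) ?_ ?_
      · push_cast at hyb ⊢
        linear_combination hyb
      · intro h
        rcases Int.prime_three.dvd_or_dvd h with h | h <;> omega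
    rintro (⟨hb, ha, h9⟩ | ⟨ha, ha3, hb, h9⟩ | ⟨ha3, hb, h27⟩)
    · by_cases hb9 : 9 ∣ b
      · obtain ⟨a', ha'⟩ := h9 hb9
        obtain ⟨b', hb'⟩ := hb9
        refine LN.eis2 hdeg α 0 (-a') (-b') ?_ ?_
        · rw [ha', hb'] at h0
          push_cast at h0 ⊢
          linear_combination h0
        · omega
      · obtain ⟨a', ha'⟩ := ha
        obtain ⟨b', hb'⟩ := hb
        refine LN.eis1 hdeg α 0 (-a') (-b') ?_ ?_
        · rw [ha', hb'] at h0
          push_cast at h0 ⊢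
          linear_combination h0
        · omega
    · unfold Int.ModEq at h9
      exact E1 ha hb (by omega)
    · unfold Int.ModEq at ha3 h27
      by_cases h9 : 9 ∣ b ^ 2 - a - 1
      · obtain ⟨s, hs⟩ := h9
        obtain ⟨q', hq'⟩ : 9 ∣ 3 * b ^ 2 - a := by omega
        have hyb := hy b
        rw [hq', hbig, hs] at hyb
        refine LN.eis2 hdeg (α - b) b q' (b * s) ?_ ?_
        · push_cast at hyb ⊢
          linear_combination hyb
        · intro h
          rcases Int.prime_three.dvd_or_dvd h with h | h <;> omega
      · exact E1 (by omega) hb h9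
end
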